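/- arXiv:2206.00503 — 7 statements merged into one kernel-verified Lean document; each statement's English description precedes it below -/
import Mathlib

section
/- Let N ≥ 2 and r ≥ 1 be integers. Suppose A and B are complex symmetric (N+1)×(N+1) matrices such that rank(a•A + b•B) = 2r for every pair (a,b) ∈ ℂ² with (a,b) ≠ (0,0), and suppose the pencil is non-degenerate, i.e. ker A ∩ ker B = {0} and the column spaces of A and B together span ℂ^{N+1}. Then 2r ≤ N and N ≤ 3r − 1. -/
open Matrix

/-!
Over an algebraically closed field, a square pencil spanned by `f` and `g` has a singular member:
either `g` itself is singular, or `g⁻¹ ∘ f` has an eigenvector `v`, with eigenvalue `μ`, and then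
`f - μ • g` kills `v`. Hence the constant rank is less than the size.

For the other inequality, `f` and `f + g` agree on `ker g`, hence `f (ker g)` lies in
`range f ⊓ range (f + g)`. Non-degeneracy makes `f` injective on `ker g` and makes the two ranges
span the target, and comparing dimensions bounds the sum of the dimensions of source and target by
`rank f + rank g + rank (f + g)`.
-/

open Module

section Field

variable {K V W : Type*} [Field K] [IsAlgClosed K] [AddCommGroup V] [Module K V]
  [AddCommGroup W] [Module K W] [FiniteDimensional K V] [FiniteDimensional K W]

theorem exists_smul_add_smul_apply_eq_zero [Nontrivial V] (hdim : finrank K W ≤ finrank K V)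
    (f g : V →ₗ[K] W) :
    ∃ a b : K, ¬(a = 0 ∧ b = 0) ∧ ∃ v ≠ 0, (a • f + b • g) v = 0 := by
  by_cases hg : Function.Injective g
  · let e : V ≃ₗ[K] W :=
      g.linearEquivOfInjective hg ((LinearMap.finrank_le_finrank_of_injective hg).antisymm hdim)
    obtain ⟨μ, hμ⟩ := End.exists_eigenvalue (e.symm.toLinearMap ∘ₗ f)
    obtain ⟨v, hv⟩ := hμ.exists_hasEigenvector
    have hfv : f v = μ • g v := by
      have hsymm : e.symm (f v) = μ • v := hv.apply_eq_smul
      rwa [LinearEquiv.symm_apply_eq, map_smul] at hsymm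
    exact ⟨1, -μ, by simp, v, hv.2, by simp [hfv]⟩
  · obtain ⟨v, hgv, hv⟩ : ∃ v, g v = 0 ∧ v ≠ 0 := by
      simpa [injective_iff_map_eq_zero] using hg
    exact ⟨0, 1, by simp, v, hv, by simpa using hgv⟩

end Field

section Ring

variable {R V W : Type*} [Ring R] [AddCommGroup V] [Module R V] [AddCommGroup W] [Module R W]

theorem range_sup_range_add (f g : V →ₗ[R] W) :
    LinearMap.range f ⊔ LinearMap.range (f + g) = LinearMap.range f ⊔ LinearMap.range g := by
  apply le_antisymm <;> refine sup_le le_sup_left ?_ <;> rintro _ ⟨v, rfl⟩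
  · exact Submodule.add_mem_sup ⟨v, rfl⟩ ⟨v, rfl⟩
  · rw [show g v = f (-v) + (f + g) v by simp]
    exact Submodule.add_mem_sup ⟨-v, rfl⟩ ⟨v, rfl⟩

theorem map_ker_le_range_inf_range_add (f g : V →ₗ[R] W) :
    (LinearMap.ker g).map f ≤ LinearMap.range f ⊓ LinearMap.range (f + g) := by
  rintro _ ⟨v, hv, rfl⟩
  have hgv : g v = 0 := hv
  exact ⟨⟨v, rfl⟩, v, by simp [hgv]⟩

end Ring

section DivisionRing

variable {K V W : Type*} [DivisionRing K] [AddCommGroup V] [Module K V] [FiniteDimensional K V]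
  [AddCommGroup W] [Module K W]

theorem finrank_map_add_finrank_inf_ker (f : V →ₗ[K] W) (p : Submodule K V) :
    finrank K (p.map f) + finrank K ↥(p ⊓ LinearMap.ker f) = finrank K p := by
  rw [← LinearMap.range_domRestrict, ← Submodule.map_comap_subtype,
    Submodule.finrank_map_subtype_eq, ← LinearMap.ker_domRestrict,
    LinearMap.finrank_range_add_finrank_ker]

theorem finrank_add_finrank_range_sup_range_le (f g : V →ₗ[K] W) :
    finrank K V + finrank K ↥(LinearMap.range f ⊔ LinearMap.range g) ≤
      finrank K (LinearMap.range f) + finrank K (LinearMap.range g) +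
        finrank K (LinearMap.range (f + g)) +
        finrank K ↥(LinearMap.ker g ⊓ LinearMap.ker f) := by
  have hnullity := g.finrank_range_add_finrank_ker
  have hker := finrank_map_add_finrank_inf_ker f (LinearMap.ker g)
  have hmap := Submodule.finrank_mono (map_ker_le_range_inf_range_add f g)
  have hranges := Submodule.finrank_sup_add_finrank_inf_eq
    (LinearMap.range f) (LinearMap.range (f + g))
  rw [range_sup_range_add] at hranges
  lia

theorem finrank_add_finrank_le_of_disjoint_ker_of_codisjoint_range {f g : V →ₗ[K] W}
    (hker : Disjoint (LinearMap.ker f) (LinearMap.ker g))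
    (hrange : Codisjoint (LinearMap.range f) (LinearMap.range g)) :
    finrank K V + finrank K W ≤ finrank K (LinearMap.range f) + finrank K (LinearMap.range g) +
      finrank K (LinearMap.range (f + g)) := by
  have hle := finrank_add_finrank_range_sup_range_le f g
  rwa [hrange.eq_top, hker.symm.eq_bot, finrank_top, finrank_bot, add_zero] at hle

end DivisionRing

section Matrix

variable {K m n : Type*} [Field K] [Fintype n]

theorem rank_lt_card_of_mulVec_eq_zero {M : Matrix m n K} {v : n → K} (hv : v ≠ 0)
    (hMv : M *ᵥ v = 0) : M.rank < Fintype.card n := by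
  have hker : 0 < finrank K (LinearMap.ker M.mulVecLin) :=
    Submodule.one_le_finrank_iff.mpr ((Submodule.ne_bot_iff _).mpr ⟨v, hMv, hv⟩)
  have hnullity := M.mulVecLin.finrank_range_add_finrank_ker
  rw [finrank_fintype_fun_eq_card] at hnullity
  simp only [Matrix.rank]
  lia

variable [Fintype m]

theorem exists_rank_smul_add_smul_lt_card [IsAlgClosed K] [Nonempty n]
    (hcard : Fintype.card m ≤ Fintype.card n) (A B : Matrix m n K) :
    ∃ a b : K, ¬(a = 0 ∧ b = 0) ∧ (a • A + b • B).rank < Fintype.card n := by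
  obtain ⟨a, b, hab, v, hv, hzero⟩ :=
    exists_smul_add_smul_apply_eq_zero (by simpa using hcard) A.mulVecLin B.mulVecLin
  refine ⟨a, b, hab, rank_lt_card_of_mulVec_eq_zero hv ?_⟩
  simpa [Matrix.add_mulVec, Matrix.smul_mulVec] using hzero

theorem card_add_card_le_rank_add_rank_add_rank {A B : Matrix m n K}
    (hker : ∀ v : n → K, A *ᵥ v = 0 → B *ᵥ v = 0 → v = 0)
    (hspan : LinearMap.range A.mulVecLin ⊔ LinearMap.range B.mulVecLin = ⊤) :
    Fintype.card n + Fintype.card m ≤ A.rank + B.rank + (A + B).rank := by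
  have hdisjoint : Disjoint (LinearMap.ker A.mulVecLin) (LinearMap.ker B.mulVecLin) :=
    Submodule.disjoint_def.mpr hker
  have hle := finrank_add_finrank_le_of_disjoint_ker_of_codisjoint_range hdisjoint
    (codisjoint_iff.mpr hspan)
  rwa [← Matrix.mulVecLin_add, finrank_fintype_fun_eq_card, finrank_fintype_fun_eq_card] at hle

end Matrix

theorem pencil_constant_rank_size_bounds_general {K n : Type*} [Field K] [IsAlgClosed K]
    [Fintype n] [Nonempty n] {ρ : ℕ} {A B : Matrix n n K}
    (hrank : ∀ a b : K, ¬(a = 0 ∧ b = 0) → (a • A + b • B).rank = ρ)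
    (hker : ∀ v : n → K, A *ᵥ v = 0 → B *ᵥ v = 0 → v = 0)
    (hspan : LinearMap.range A.mulVecLin ⊔ LinearMap.range B.mulVecLin = ⊤) :
    ρ < Fintype.card n ∧ 2 * Fintype.card n ≤ 3 * ρ := by
  have hA : A.rank = ρ := by simpa using hrank 1 0
  have hB : B.rank = ρ := by simpa using hrank 0 1
  have hAB : (A + B).rank = ρ := by simpa using hrank 1 1
  obtain ⟨a, b, hab, hlt⟩ := exists_rank_smul_add_smul_lt_card le_rfl A B
  have hsum := card_add_card_le_rank_add_rank_add_rank hker hspan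
  rw [hA, hB, hAB] at hsum
  exact ⟨hrank a b hab ▸ hlt, by lia⟩

/-- A non-degenerate pencil of complex symmetric `(N+1) × (N+1)` matrices
of constant rank `2r` exists only if `2r ≤ N ≤ 3r - 1`. -/
theorem pencil_constant_rank_size_bounds
    (N r : ℕ) (hN : 2 ≤ N) (hr : 1 ≤ r)
    (A B : Matrix (Fin (N + 1)) (Fin (N + 1)) ℂ)
    (hAsymm : A.IsSymm) (hBsymm : B.IsSymm)
    (hrank : ∀ a b : ℂ, ¬(a = 0 ∧ b = 0) → (a • A + b • B).rank = 2 * r)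
    (hker : ∀ v : Fin (N + 1) → ℂ, A.mulVec v = 0 → B.mulVec v = 0 → v = 0)
    (hspan : LinearMap.range A.mulVecLin ⊔ LinearMap.range B.mulVecLin = ⊤) :
    2 * r ≤ N ∧ N ≤ 3 * r - 1 := by
  have hbounds := pencil_constant_rank_size_bounds_general hrank hker hspan
  grind [Fintype.card_fin]
end

section
/- Let A and B be complex symmetric (N+1)×(N+1) matrices and let k be a natural number such that rank(a•A + b•B) = k for every pair (a,b) ∈ ℂ² with (a,b) ≠ (0,0). Then k is even. -/
open Matrix

/-!
Let `M` be a symmetric matrix of polynomials whose value at every point has rank `r`. A rank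
factorization turns the minors of order `r` into products `x I * y J`, so by symmetry
`det M[I, J] ^ 2 = det M[I, I] * det M[J, J]`, and at each point some principal minor `det M[J, J]`
is nonzero. Hence every root of `det M[I, I]` has even multiplicity. For the pencil `A + X B`,
choose `I` with `det B[I, I] ≠ 0`: then `det M[I, I]` has degree exactly `r`, and over an
algebraically closed field the degree is the sum of the multiplicities of the roots.
-/

section Minors

variable {K m n : Type*} [Field K] [Finite m] [Fintype n] {r : ℕ}

lemma exists_linearIndependent_rows_span_eq {M : Matrix m n K} (hM : M.rank = r) :
    ∃ f : Fin r → m, LinearIndependent K (M.submatrix f id).row ∧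
      Submodule.span K (Set.range (M.submatrix f id).row) =
        Submodule.span K (Set.range M.row) := by
  subst hM
  rw [rank_eq_finrank_span_row]
  obtain ⟨v, hv_mem, hv_span, hv_indep⟩ :=
    Submodule.exists_fun_fin_finrank_span_eq K (Set.range M.row)
  choose f hf using hv_mem
  obtain rfl : (fun i ↦ M (f i)) = v := funext hf
  exact ⟨f, hv_indep, hv_span⟩

lemma exists_eq_mul_of_rank_eq {M : Matrix m n K} (hM : M.rank = r) :
    ∃ (X : Matrix m (Fin r) K) (Y : Matrix (Fin r) n K), M = X * Y := by
  obtain ⟨f, -, hspan⟩ := exists_linearIndependent_rows_span_eq hM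
  have hcoeff (i : m) : ∃ c : Fin r → K, ∑ j, c j • M (f j) = M i :=
    (Submodule.mem_span_range_iff_exists_fun K).mp <|
      hspan ▸ Submodule.subset_span (Set.mem_range_self i)
  choose X hX using hcoeff
  refine ⟨of X, M.submatrix f id, ?_⟩
  ext i j
  simp [← hX i, mul_apply]

lemma det_submatrix_mul_det_submatrix_swap {M : Matrix m n K} (hM : M.rank = r)
    (I I' : Fin r → m) (J J' : Fin r → n) :
    (M.submatrix I J).det * (M.submatrix I' J').det =
      (M.submatrix I J').det * (M.submatrix I' J).det := by
  obtain ⟨X, Y, rfl⟩ := exists_eq_mul_of_rank_eq hM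
  have hdet (I : Fin r → m) (J : Fin r → n) :
      ((X * Y).submatrix I J).det = (X.submatrix I id).det * (Y.submatrix id J).det := by
    rw [← det_mul, ← submatrix_mul X Y I id J Function.bijective_id]
  simp only [hdet]
  ring

lemma exists_det_submatrix_ne_zero {M : Matrix m n K} (hM : M.rank = r) :
    ∃ (I : Fin r → m) (J : Fin r → n), (M.submatrix I J).det ≠ 0 := by
  obtain ⟨I, hI, -⟩ := exists_linearIndependent_rows_span_eq hM
  have hrank : (M.submatrix I id)ᵀ.rank = r := by
    rw [rank_transpose, hI.rank_matrix, Fintype.card_fin]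
  obtain ⟨J, hJ, -⟩ := exists_linearIndependent_rows_span_eq hrank
  have hunit : IsUnit (M.submatrix I J)ᵀ := linearIndependent_rows_iff_isUnit.mp hJ
  refine ⟨I, J, ?_⟩
  rw [← det_transpose]
  exact ((isUnit_iff_isUnit_det _).mp hunit).ne_zero

end Minors

section SymmetricMinors

variable {K n : Type*} [Field K] [Fintype n] {r : ℕ} {S : Matrix n n K}

lemma det_submatrix_sq_of_isSymm (hS : S.IsSymm) (hr : S.rank = r) (I J : Fin r → n) :
    (S.submatrix I J).det ^ 2 = (S.submatrix I I).det * (S.submatrix J J).det := by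
  have hswap : (S.submatrix I J).det = (S.submatrix J I).det := by
    rw [← det_transpose, transpose_submatrix, hS.eq]
  calc (S.submatrix I J).det ^ 2
      = (S.submatrix I J).det * (S.submatrix J I).det := by rw [sq, ← hswap]
    _ = (S.submatrix I I).det * (S.submatrix J J).det :=
      det_submatrix_mul_det_submatrix_swap hr I J J I

lemma exists_det_submatrix_self_ne_zero_of_isSymm (hS : S.IsSymm) (hr : S.rank = r) :
    ∃ I : Fin r → n, (S.submatrix I I).det ≠ 0 := by
  obtain ⟨I, J, hIJ⟩ := exists_det_submatrix_ne_zero hr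
  have hmul : (S.submatrix I I).det * (S.submatrix J J).det ≠ 0 :=
    det_submatrix_sq_of_isSymm hS hr I J ▸ pow_ne_zero 2 hIJ
  exact ⟨I, left_ne_zero_of_mul hmul⟩

end SymmetricMinors

section MatrixPolynomial

open Polynomial

lemma even_rootMultiplicity_of_sq_eq_mul {R : Type*} [CommRing R] [IsDomain R] {p q s : R[X]}
    {t : R} (h : s ^ 2 = p * q) (hq : q.eval t ≠ 0) : Even (p.rootMultiplicity t) := by
  rcases eq_or_ne p 0 with rfl | hp
  · simp
  have hpq : p * q ≠ 0 := mul_ne_zero hp fun hq0 ↦ hq (by simp [hq0])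
  have hss : s * s ≠ 0 := by rwa [← sq, h]
  refine ⟨s.rootMultiplicity t, ?_⟩
  calc p.rootMultiplicity t
      = (p * q).rootMultiplicity t := by
        rw [rootMultiplicity_mul hpq, rootMultiplicity_eq_zero hq, add_zero]
    _ = s.rootMultiplicity t + s.rootMultiplicity t := by
        rw [← h, sq, rootMultiplicity_mul hss]

lemma even_natDegree_of_even_rootMultiplicity {R : Type*} [CommRing R] [IsDomain R] {p : R[X]}
    (hp : p.Splits) (h : ∀ t, Even (p.rootMultiplicity t)) : Even p.natDegree := by
  classical
  rw [hp.natDegree_eq_card_roots, ← Multiset.toFinset_sum_count_eq]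
  refine Finset.even_sum _ fun t _ ↦ ?_
  rw [count_roots]
  exact h t

lemma natDegree_det_X_add_C_of_det_ne_zero {R n : Type*} [CommRing R] [Fintype n] [DecidableEq n]
    {A : Matrix n n R} (hA : A.det ≠ 0) (B : Matrix n n R) :
    (det ((X : R[X]) • A.map C + B.map C)).natDegree = Fintype.card n :=
  natDegree_eq_of_le_of_coeff_ne_zero (natDegree_det_X_add_C_le A B) <| by
    rwa [coeff_det_X_add_C_card]

lemma even_rootMultiplicity_det_submatrix_of_isSymm {K n : Type*} [Field K] [Infinite K]
    [Fintype n] {r : ℕ} {M : Matrix n n K[X]} (hM : M.IsSymm)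
    (hr : ∀ t, (M.map (evalRingHom t)).rank = r) (I : Fin r → n) (t : K) :
    Even ((M.submatrix I I).det.rootMultiplicity t) := by
  have heval (s : K) (I J : Fin r → n) :
      (M.submatrix I J).det.eval s = ((M.map (evalRingHom s)).submatrix I J).det :=
    (evalRingHom s).map_det _
  have hsq (J : Fin r → n) :
      (M.submatrix I J).det ^ 2 = (M.submatrix I I).det * (M.submatrix J J).det := by
    refine Polynomial.funext fun s ↦ ?_
    simp only [eval_pow, eval_mul, heval]
    exact det_submatrix_sq_of_isSymm (hM.map _) (hr s) I J
  obtain ⟨J, hJ⟩ := exists_det_submatrix_self_ne_zero_of_isSymm (hM.map _) (hr t)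
  exact even_rootMultiplicity_of_sq_eq_mul (hsq J) (by rwa [heval])

theorem pencil_constant_rank_even_general {K n : Type*} [Field K] [IsAlgClosed K] [Fintype n]
    {k : ℕ} {A B : Matrix n n K} (hA : A.IsSymm) (hB : B.IsSymm)
    (hrank : ∀ a b : K, ¬(a = 0 ∧ b = 0) → (a • A + b • B).rank = k) :
    Even k := by
  have hBrank : B.rank = k := by simpa using hrank 0 1 (by simp)
  obtain ⟨I, hI⟩ := exists_det_submatrix_self_ne_zero_of_isSymm hB hBrank
  let M : Matrix n n K[X] := (X : K[X]) • B.map C + A.map C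
  have hM : M.IsSymm := ((hB.map C).smul X).add (hA.map C)
  have hMrank (t : K) : (M.map (evalRingHom t)).rank = k := by
    have hMt : M.map (evalRingHom t) = (1 : K) • A + t • B := by
      ext i j
      simp [M, add_comm (A i j), mul_comm t]
    exact hMt ▸ hrank 1 t (by simp)
  have hdeg : (M.submatrix I I).det.natDegree = k :=
    (natDegree_det_X_add_C_of_det_ne_zero hI (A.submatrix I I)).trans (Fintype.card_fin k)
  rw [← hdeg]
  exact even_natDegree_of_even_rootMultiplicity (IsAlgClosed.splits _)
    (even_rootMultiplicity_det_submatrix_of_isSymm hM hMrank I)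

end MatrixPolynomial

/-- If a pencil of complex symmetric matrices has constant rank `k`,
then `k` is even. -/
theorem pencil_constant_rank_even
    (N k : ℕ)
    (A B : Matrix (Fin (N + 1)) (Fin (N + 1)) ℂ)
    (hAsymm : A.IsSymm) (hBsymm : B.IsSymm)
    (hrank : ∀ a b : ℂ, ¬(a = 0 ∧ b = 0) → (a • A + b • B).rank = k) :
    Even k :=
  pencil_constant_rank_even_general hAsymm hBsymm hrank
end

section
/- Let N ≥ 2 and r ≥ 1 be integers, and let A and B be complex symmetric (N+1)×(N+1) matrices such that rank(a•A + b•B) = 2r for every (a,b) ∈ ℂ² \ {(0,0)}, with ker A ∩ ker B = {0} and the column spaces of A and B together spanning ℂ^{N+1}. Then, with h = N + 1 − 2r, there exist integers 1 ≤ r₁ ≤ r₂ ≤ … ≤ r_h with r₁ + … + r_h = r and an invertible complex (N+1)×(N+1) matrix P such that the ℂ-linear span of {PᵀAP, PᵀBP} equals the ℂ-linear span of {𝒜, ℬ}, where 𝒜 and ℬ are the canonical matrices associated to the partition (r₁,…,r_h). -/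
/-!
Let `K` be the sum of the kernels of all nonzero members of the pencil. Since the rank is constant,
all nonzero members have the same image on `K`, and `K` is isotropic for each of them; as an
endomorphism over an algebraically closed field has an eigenvalue, `K` is even its own orthogonal.
Hence the pencil induces maps `V ⧸ K → Dual K` all of whose nonzero members are injective, and
Kronecker's theorem gives bases of `V ⧸ K` and of `Dual K` consisting of chains. The basis of `K`
dual to the latter and a lift of the former to an isotropic complement of `K` together form a basis
of `V` in which the pencil is canonical. An arbitrary lift is made isotropic by subtracting elements
of `K`, which amounts to dividing by `2`.
-/

open Matrix

/-- Index type of the canonical pencil associated to the partition `rr`: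
pairs `(i, p)` with `i : Fin h` and `0 ≤ p ≤ 2 rᵢ`. -/
abbrev PencilIdx (h : ℕ) (rr : Fin h → ℕ) := (i : Fin h) × Fin (2 * rr i + 1)

/-- The first canonical matrix `𝒜` of the pencil `L_{(r₁,…,r_h)}`. -/
def canA (h : ℕ) (rr : Fin h → ℕ) : Matrix (PencilIdx h rr) (PencilIdx h rr) ℂ :=
  Matrix.of fun u v =>
    if u.1 = v.1 ∧
        (((v.2 : ℕ) = (u.2 : ℕ) + rr u.1 ∧ (u.2 : ℕ) < rr u.1) ∨
         ((u.2 : ℕ) = (v.2 : ℕ) + rr u.1 ∧ (v.2 : ℕ) < rr u.1)) then 1 else 0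

/-- The second canonical matrix `ℬ` of the pencil `L_{(r₁,…,r_h)}`. -/
def canB (h : ℕ) (rr : Fin h → ℕ) : Matrix (PencilIdx h rr) (PencilIdx h rr) ℂ :=
  Matrix.of fun u v =>
    if u.1 = v.1 ∧
        (((v.2 : ℕ) = (u.2 : ℕ) + rr u.1 + 1 ∧ (u.2 : ℕ) < rr u.1) ∨
         ((u.2 : ℕ) = (v.2 : ℕ) + rr u.1 + 1 ∧ (v.2 : ℕ) < rr u.1)) then 1 else 0

open Module LinearMap

section Pencil

variable {𝕜 V W : Type*} [Field 𝕜] [AddCommGroup V] [Module 𝕜 V] [AddCommGroup W] [Module 𝕜 W]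

/-- The pencil `(a, b) ↦ a • f + b • g` spanned by two linear maps. -/
def pencil (f g : V →ₗ[𝕜] W) : 𝕜 × 𝕜 →ₗ[𝕜] V →ₗ[𝕜] W :=
  (toSpanSingleton 𝕜 _ f).coprod (toSpanSingleton 𝕜 _ g)

@[simp]
theorem pencil_apply (f g : V →ₗ[𝕜] W) (p : 𝕜 × 𝕜) (x : V) :
    pencil f g p x = p.1 • f x + p.2 • g x := rfl

theorem exists_pencil_apply_eq_smul {f g : V →ₗ[𝕜] W} {p q : 𝕜 × 𝕜}
    (hpq : p.1 * q.2 ≠ p.2 * q.1) {x : V} (hx : pencil f g p x = 0) (m : 𝕜 × 𝕜) :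
    ∃ c : 𝕜, pencil f g m x = c • pencil f g q x := by
  have hdet := sub_ne_zero.2 hpq
  set d := p.1 * q.2 - p.2 * q.1
  have hm : m = ((m.1 * q.2 - m.2 * q.1) / d) • p + ((p.1 * m.2 - p.2 * m.1) / d) • q := by
    ext <;> simp only [Prod.fst_add, Prod.snd_add, Prod.smul_fst, Prod.smul_snd, smul_eq_mul] <;>
      field_simp <;> ring
  refine ⟨(p.1 * m.2 - p.2 * m.1) / d, ?_⟩
  conv_lhs => rw [hm, map_add, map_smul, map_smul]
  rw [LinearMap.add_apply, LinearMap.smul_apply, hx, smul_zero, zero_add, LinearMap.smul_apply]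

theorem pencil_apply_eq_zero_of_mul_eq_mul {f g : V →ₗ[𝕜] W} {p q : 𝕜 × 𝕜}
    (hpq : p.1 * q.2 = p.2 * q.1) (hq : q ≠ 0) {x : V} (hx : pencil f g q x = 0) :
    pencil f g p x = 0 := by
  have hfst : q.1 • pencil f g p x = p.1 • pencil f g q x := by
    simp only [pencil_apply, smul_add, smul_smul, hpq, mul_comm]
  have hsnd : q.2 • pencil f g p x = p.2 • pencil f g q x := by
    simp only [pencil_apply, smul_add, smul_smul, ← hpq, mul_comm]
  rw [hx, smul_zero, smul_eq_zero] at hfst hsnd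
  by_contra hne
  exact hq (Prod.ext (hfst.resolve_right hne) (hsnd.resolve_right hne))

theorem exists_forall_mul_ne_mul [Infinite 𝕜] (S : Finset {p : 𝕜 × 𝕜 // p ≠ 0}) :
    ∃ q : 𝕜 × 𝕜, q ≠ 0 ∧ ∀ p ∈ S, p.1.1 * q.2 ≠ p.1.2 * q.1 := by
  classical
  obtain ⟨t, ht⟩ := Infinite.exists_notMem_finset (S.image fun p => p.1.2 / p.1.1)
  refine ⟨(1, t), by simp, fun p hp heq => ht (Finset.mem_image.2 ⟨p, hp, ?_⟩)⟩
  rw [mul_one] at heq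
  have hp1 : p.1.1 ≠ 0 := fun h => p.2 (Prod.ext h (by rw [← heq, h, zero_mul]; rfl))
  exact (eq_div_of_mul_eq hp1 (by rw [mul_comm, heq])).symm

theorem exists_ne_zero_injective_add_smul [Infinite 𝕜] [FiniteDimensional 𝕜 V]
    {f : V →ₗ[𝕜] W} (hf : Function.Injective f) (g : V →ₗ[𝕜] W) :
    ∃ t : 𝕜, t ≠ 0 ∧ Function.Injective (f + t • g) := by
  obtain ⟨l, hl⟩ := f.exists_leftInverse_of_injective (ker_eq_bot.2 hf)
  obtain ⟨s, hs⟩ := ((Module.End.finite_hasEigenvalue (l ∘ₗ g)).insert 0).infinite_compl.nonempty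
  obtain ⟨hs0, hs⟩ := not_or.1 hs
  refine ⟨-s⁻¹, by simpa using hs0, (injective_iff_map_eq_zero _).2 fun x hx => ?_⟩
  by_contra hx0
  refine hs (Module.End.hasEigenvalue_of_hasEigenvector (x := x) ⟨?_, hx0⟩)
  have hlx : x = s⁻¹ • l (g x) := by
    simpa [show l (f x) = x from LinearMap.congr_fun hl x, ← sub_eq_add_neg, sub_eq_zero]
      using congrArg l hx
  exact Module.End.mem_eigenspace_iff.2 ((eq_inv_smul_iff₀ hs0).1 hlx).symm

theorem finrank_map_add_finrank_ker [FiniteDimensional 𝕜 V] {f : V →ₗ[𝕜] W} {X : Submodule 𝕜 V}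
    (hX : ker f ≤ X) : finrank 𝕜 (X.map f) + finrank 𝕜 (ker f) = finrank 𝕜 X := by
  rw [← (Submodule.comapSubtypeEquivOfLe hX).finrank_eq, ← ker_domRestrict, ← range_domRestrict,
    finrank_range_add_finrank_ker]

/- If `g x` were outside `range f`, the rank of `f + t • g` would exceed that of `f` for a general
`t`: the images of a complement of `ker f` and of `x` would be independent. -/
theorem apply_mem_range_of_finrank_ker_le [Infinite 𝕜] [FiniteDimensional 𝕜 V]
    {f g : V →ₗ[𝕜] W} (hker : ∀ t : 𝕜, finrank 𝕜 (ker f) ≤ finrank 𝕜 (ker (f + t • g)))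
    {x : V} (hx : f x = 0) : g x ∈ range f := by
  by_contra hgx
  obtain ⟨C, hC⟩ := Submodule.exists_isCompl (ker f)
  have hinj : Function.Injective ((f ∘ₗ C.subtype).coprod (toSpanSingleton 𝕜 W (g x))) := by
    refine (injective_iff_map_eq_zero _).2 fun ⟨c, s⟩ hcs => ?_
    have hcs : f c + s • g x = 0 := hcs
    obtain rfl : s = 0 := by
      by_contra hs
      refine hgx ⟨-s⁻¹ • (c : V), ?_⟩
      rw [map_smul, neg_smul, ← smul_neg, inv_smul_eq_iff₀ hs, neg_eq_iff_add_eq_zero, hcs]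
    have hc : (c : V) = 0 :=
      Submodule.disjoint_def.1 hC.disjoint c (by simpa using hcs) c.2
    simpa using hc
  obtain ⟨t, ht0, ht⟩ :=
    exists_ne_zero_injective_add_smul hinj ((g ∘ₗ C.subtype).coprod (0 : 𝕜 →ₗ[𝕜] W))
  have hle : finrank 𝕜 (C × 𝕜) ≤ finrank 𝕜 (range (f + t • g)) := by
    rw [← finrank_range_of_inj ht]
    refine Submodule.finrank_mono ?_
    rintro _ ⟨⟨c, s⟩, rfl⟩
    refine ⟨c + (s * t⁻¹) • x, ?_⟩
    simp [hx, smul_smul, mul_comm s, mul_inv_cancel_left₀ ht0, add_comm, add_left_comm]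
  have hrank := finrank_range_add_finrank_ker (f + t • g)
  have hcompl := Submodule.finrank_add_eq_of_isCompl hC
  rw [finrank_prod, finrank_self] at hle
  have := hker t
  omega

theorem exists_pencil_apply_eq_zero [IsAlgClosed 𝕜] [FiniteDimensional 𝕜 V]
    [FiniteDimensional 𝕜 W] [Nontrivial V] (hVW : finrank 𝕜 W ≤ finrank 𝕜 V)
    (f g : V →ₗ[𝕜] W) : ∃ p : 𝕜 × 𝕜, p ≠ 0 ∧ ∃ x : V, x ≠ 0 ∧ pencil f g p x = 0 := by
  by_cases hf : Function.Injective f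
  · let e := LinearEquiv.ofInjectiveOfFinrankEq f hf
      ((finrank_le_finrank_of_injective hf).antisymm hVW)
    obtain ⟨t, ht⟩ := Module.End.exists_eigenvalue (e.symm.toLinearMap ∘ₗ g)
    obtain ⟨x, hx⟩ := ht.exists_hasEigenvector
    have hgx : g x = e (t • x) := e.symm_apply_eq.1 hx.apply_eq_smul
    replace hgx : g x = t • f x := hgx.trans (map_smul f t x)
    exact ⟨(-t, 1), by simp, x, hx.2, by simp [hgx]⟩
  · obtain ⟨x, hx, hx0⟩ : ∃ x, f x = 0 ∧ x ≠ 0 := by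
      simpa [injective_iff_map_eq_zero] using hf
    exact ⟨(1, 0), by simp, x, hx0, by simp [hx]⟩

theorem finrank_lt_finrank_of_injective_pencil [IsAlgClosed 𝕜] [FiniteDimensional 𝕜 V]
    [FiniteDimensional 𝕜 W] [Nontrivial V] {f g : V →ₗ[𝕜] W}
    (hfg : ∀ p ≠ 0, Function.Injective (pencil f g p)) : finrank 𝕜 V < finrank 𝕜 W := by
  by_contra! hle
  obtain ⟨p, hp, x, hx, hpx⟩ := exists_pencil_apply_eq_zero hle f g
  exact hx ((injective_iff_map_eq_zero _).1 (hfg p hp) x hpx)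

theorem exists_pencil_apply_mem_of_finrank_le [IsAlgClosed 𝕜] [FiniteDimensional 𝕜 V]
    [FiniteDimensional 𝕜 W] {f g : V →ₗ[𝕜] W} {K X : Submodule 𝕜 V} {L Y : Submodule 𝕜 W}
    (hKX : K < X) (hLY : L ≤ Y) (hfX : X ≤ Y.comap f) (hgX : X ≤ Y.comap g)
    (hfK : K ≤ L.comap f) (hgK : K ≤ L.comap g)
    (hle : finrank 𝕜 Y + finrank 𝕜 K ≤ finrank 𝕜 X + finrank 𝕜 L) :
    ∃ p : 𝕜 × 𝕜, p ≠ 0 ∧ ∃ x : V, x ∉ K ∧ pencil f g p x ∈ L := by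
  have : Nontrivial (X ⧸ K.submoduleOf X) := by
    rw [Submodule.Quotient.nontrivial_iff, Ne, Submodule.submoduleOf_eq_top]
    exact hKX.not_ge
  have hX := (K.submoduleOf X).finrank_quotient_add_finrank
  have hY := (L.submoduleOf Y).finrank_quotient_add_finrank
  rw [(Submodule.submoduleOfEquivOfLe hKX.le).finrank_eq] at hX
  rw [(Submodule.submoduleOfEquivOfLe hLY).finrank_eq] at hY
  obtain ⟨p, hp, y, hy, hpy⟩ := exists_pencil_apply_eq_zero (by omega)
    ((K.submoduleOf X).mapQ (L.submoduleOf Y) (f.restrict hfX) fun x hx => hfK hx)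
    ((K.submoduleOf X).mapQ (L.submoduleOf Y) (g.restrict hgX) fun x hx => hgK hx)
  obtain ⟨x, rfl⟩ := Submodule.Quotient.mk_surjective _ y
  refine ⟨p, hp, x, fun hx => hy ((Submodule.Quotient.mk_eq_zero _).2 hx), ?_⟩
  exact (Submodule.Quotient.mk_eq_zero (L.submoduleOf Y)).1 hpy

end Pencil

section KernelSpan

variable {𝕜 V W : Type*} [Field 𝕜] [AddCommGroup V] [Module 𝕜 V] [AddCommGroup W] [Module 𝕜 W]

/-- The span of the kernels of all nonzero members of the pencil spanned by `f` and `g`. -/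
def kernelSpan (f g : V →ₗ[𝕜] W) : Submodule 𝕜 V :=
  ⨆ p : {p : 𝕜 × 𝕜 // p ≠ 0}, ker (pencil f g p)

variable {f g : V →ₗ[𝕜] W} {p q : 𝕜 × 𝕜}

theorem ker_pencil_le_kernelSpan (hp : p ≠ 0) : ker (pencil f g p) ≤ kernelSpan f g :=
  le_iSup (fun p : {p : 𝕜 × 𝕜 // p ≠ 0} => ker (pencil f g p)) ⟨p, hp⟩

variable [FiniteDimensional 𝕜 V]

/- `K` is already spanned by the kernels of finitely many members, and on each of these kernels the
pencil is proportional to any member outside that finite list. -/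
theorem exists_forall_map_kernelSpan_le [Infinite 𝕜] (f g : V →ₗ[𝕜] W) :
    ∃ q : 𝕜 × 𝕜, q ≠ 0 ∧
      ∀ m, (kernelSpan f g).map (pencil f g m) ≤ (kernelSpan f g).map (pencil f g q) := by
  obtain ⟨S, hS⟩ := CompleteLattice.IsCompactElement.exists_finset_of_le_iSup (Submodule 𝕜 V)
    ((Submodule.fg_iff_compact _).1 (IsNoetherian.noetherian (kernelSpan f g))) _ le_rfl
  obtain ⟨q, hq, hqS⟩ := exists_forall_mul_ne_mul S
  refine ⟨q, hq, fun m => Submodule.map_le_iff_le_comap.2 (hS.trans (iSup₂_le fun p hp x hx => ?_))⟩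
  obtain ⟨c, hc⟩ := exists_pencil_apply_eq_smul (hqS p hp) hx m
  rw [Submodule.mem_comap, hc]
  exact Submodule.smul_mem _ c (Submodule.mem_map_of_mem (ker_pencil_le_kernelSpan p.2 hx))

variable {h : ℕ} (hconst : ∀ p ≠ 0, finrank 𝕜 (ker (pencil f g p)) = h)
include hconst

theorem pencil_apply_mem_range_of_mem_ker [Infinite 𝕜] (hp : p ≠ 0) {x : V}
    (hx : pencil f g p x = 0) (m : 𝕜 × 𝕜) : pencil f g m x ∈ range (pencil f g p) := by
  obtain ⟨q, -, hpq⟩ := exists_forall_mul_ne_mul {⟨p, hp⟩}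
  have hpq : p.1 * q.2 ≠ p.2 * q.1 := hpq _ (Finset.mem_singleton_self _)
  obtain ⟨c, hc⟩ := exists_pencil_apply_eq_smul hpq hx m
  rw [hc]
  refine Submodule.smul_mem _ c (apply_mem_range_of_finrank_ker_le (fun t => ?_) hx)
  have hne : p + t • q ≠ 0 := fun h => hpq <| by
    rw [eq_neg_of_add_eq_zero_left h]
    simp only [Prod.fst_neg, Prod.snd_neg, Prod.smul_fst, Prod.smul_snd, smul_eq_mul]
    ring
  rw [← map_smul, ← map_add, hconst p hp, hconst _ hne]

theorem map_pencil_kernelSpan_eq [Infinite 𝕜] (hp : p ≠ 0) (hq : q ≠ 0) :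
    (kernelSpan f g).map (pencil f g p) = (kernelSpan f g).map (pencil f g q) := by
  obtain ⟨q₀, hq₀, hle⟩ := exists_forall_map_kernelSpan_le f g
  have hfin : ∀ p ≠ 0, finrank 𝕜 ((kernelSpan f g).map (pencil f g p)) + h =
      finrank 𝕜 (kernelSpan f g) := fun p hp => by
    rw [← hconst p hp, finrank_map_add_finrank_ker (ker_pencil_le_kernelSpan hp)]
  have heq : ∀ p ≠ 0, (kernelSpan f g).map (pencil f g p) = (kernelSpan f g).map (pencil f g q₀) :=
    fun p hp => Submodule.eq_of_le_of_finrank_eq (hle p)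
      (Nat.add_right_cancel ((hfin p hp).trans (hfin q₀ hq₀).symm))
  rw [heq p hp, heq q hq]

theorem mem_kernelSpan_of_pencil_apply_mem [Infinite 𝕜] (hp : p ≠ 0) (hq : q ≠ 0) {v : V}
    (hv : pencil f g p v ∈ (kernelSpan f g).map (pencil f g q)) : v ∈ kernelSpan f g := by
  rw [map_pencil_kernelSpan_eq hconst hq hp] at hv
  obtain ⟨k, hk, hkv⟩ := hv
  have hker : v - k ∈ ker (pencil f g p) := by rw [mem_ker, map_sub, hkv, sub_self]
  exact (Submodule.sub_mem_iff_left _ hk).1 (ker_pencil_le_kernelSpan hp hker)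

end KernelSpan

section Symmetric

variable {𝕜 V : Type*} [Field 𝕜] [AddCommGroup V] [Module 𝕜 V] {A B : LinearMap.BilinForm 𝕜 V}

theorem pencil_apply_comm (hA : A.IsSymm) (hB : B.IsSymm) (p : 𝕜 × 𝕜) (x y : V) :
    pencil A B p x y = pencil A B p y x := by
  simp [hA.eq x y, hB.eq x y]

variable [FiniteDimensional 𝕜 V] {h : ℕ}

theorem pencil_apply_eq_zero_of_mem_ker [Infinite 𝕜] (hA : A.IsSymm) (hB : B.IsSymm)
    (hconst : ∀ p ≠ 0, finrank 𝕜 (ker (pencil A B p)) = h) {p q : 𝕜 × 𝕜} (hp : p ≠ 0) (hq : q ≠ 0)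
    {x y : V} (hx : x ∈ ker (pencil A B p)) (hy : y ∈ ker (pencil A B q)) (m : 𝕜 × 𝕜) :
    pencil A B m x y = 0 := by
  by_cases hpq : p.1 * q.2 = p.2 * q.1
  · obtain ⟨z, hz⟩ := pencil_apply_mem_range_of_mem_ker hconst hp hx m
    rw [← hz, pencil_apply_comm hA hB, pencil_apply_eq_zero_of_mul_eq_mul hpq hq hy,
      LinearMap.zero_apply]
  · obtain ⟨c, hc⟩ := exists_pencil_apply_eq_smul hpq hx m
    rw [hc, LinearMap.smul_apply, pencil_apply_comm hA hB, mem_ker.1 hy, LinearMap.zero_apply,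
      smul_zero]

variable (hA : A.IsSymm) (hB : B.IsSymm)
  (hconst : ∀ p ≠ 0, finrank 𝕜 (ker (pencil A B p)) = h)
include hA hB hconst

theorem pencil_apply_eq_zero_of_mem_kernelSpan [Infinite 𝕜] {x y : V}
    (hx : x ∈ kernelSpan A B) (hy : y ∈ kernelSpan A B) (m : 𝕜 × 𝕜) : pencil A B m x y = 0 := by
  have hle : ∀ p : {p : 𝕜 × 𝕜 // p ≠ 0}, ∀ x ∈ ker (pencil A B p),
      kernelSpan A B ≤ ker (pencil A B m x) := fun p x hx => iSup_le fun q y hy =>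
    pencil_apply_eq_zero_of_mem_ker hA hB hconst p.2 q.2 hx hy m
  have hle' : kernelSpan A B ≤ ker ((pencil A B m).flip y) := iSup_le fun p x hx => hle p x hx hy
  exact hle' hx

/- The kernel span `K` is isotropic, so every member of the pencil maps its orthogonal `X` into the
annihilator of `K`, and `K` into the common image `L`. If `K ≠ X`, some member of the pencil would
send a vector of `X` outside `K` into `L`, by comparison of the dimensions of `X ⧸ K` and of
`K.dualAnnihilator ⧸ L`. -/
theorem kernelSpan_eq_dualCoannihilator [IsAlgClosed 𝕜] {q : 𝕜 × 𝕜} (hq : q ≠ 0) :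
    kernelSpan A B = ((kernelSpan A B).map (pencil A B q)).dualCoannihilator := by
  have : Infinite 𝕜 := IsAlgClosed.instInfinite
  set K := kernelSpan A B
  set L : Submodule 𝕜 (Dual 𝕜 V) := K.map (pencil A B q) with hL
  have hmem : ∀ {k}, k ∈ K → ∀ m ≠ 0, pencil A B m k ∈ L := fun hk m hm => by
    rw [hL, map_pencil_kernelSpan_eq hconst hq hm]
    exact Submodule.mem_map_of_mem hk
  have hX : ∀ x ∈ L.dualCoannihilator, ∀ m ≠ 0, pencil A B m x ∈ K.dualAnnihilator :=
    fun x hx m hm => (Submodule.mem_dualAnnihilator _).2 fun k hk => by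
      rw [pencil_apply_comm hA hB]
      exact (Submodule.mem_dualCoannihilator _).1 hx _ (hmem hk m hm)
  have hKX : K ≤ L.dualCoannihilator := fun x hx => (Submodule.mem_dualCoannihilator _).2 <| by
    rintro _ ⟨k, hk, rfl⟩
    exact pencil_apply_eq_zero_of_mem_kernelSpan hA hB hconst hk hx q
  have hLK : L ≤ K.dualAnnihilator := by
    rintro _ ⟨k, hk, rfl⟩
    exact hX k (hKX hk) q hq
  have hdim : finrank 𝕜 K.dualAnnihilator + finrank 𝕜 K =
      finrank 𝕜 L.dualCoannihilator + finrank 𝕜 L := by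
    rw [add_comm, Subspace.finrank_add_finrank_dualAnnihilator_eq, add_comm,
      Subspace.finrank_add_finrank_dualCoannihilator_eq]
  by_contra hne
  obtain ⟨p, hp, x, hx, hpx⟩ := exists_pencil_apply_mem_of_finrank_le (f := A) (g := B)
    (lt_of_le_of_ne hKX hne) hLK (fun x hx => by simpa using hX x hx (1, 0) (by simp))
    (fun x hx => by simpa using hX x hx (0, 1) (by simp))
    (fun k hk => by simpa using hmem hk (1, 0) (by simp))
    (fun k hk => by simpa using hmem hk (0, 1) (by simp)) hdim.le
  exact hx (mem_kernelSpan_of_pencil_apply_mem hconst hp hq hpx)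

theorem mem_kernelSpan_of_forall_pencil_apply_eq_zero [IsAlgClosed 𝕜] {q : 𝕜 × 𝕜} (hq : q ≠ 0)
    {v : V} (hv : ∀ k ∈ kernelSpan A B, pencil A B q v k = 0) : v ∈ kernelSpan A B := by
  rw [kernelSpan_eq_dualCoannihilator hA hB hconst hq, Submodule.mem_dualCoannihilator]
  rintro _ ⟨k, hk, rfl⟩
  rw [pencil_apply_comm hA hB, hv k hk]

theorem two_mul_finrank_kernelSpan [IsAlgClosed 𝕜] :
    2 * finrank 𝕜 (kernelSpan A B) = finrank 𝕜 V + h := by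
  have hq : ((1, 0) : 𝕜 × 𝕜) ≠ 0 := by simp
  set L : Submodule 𝕜 (Dual 𝕜 V) := (kernelSpan A B).map (pencil A B (1, 0))
  have hmap : finrank 𝕜 L + h = finrank 𝕜 (kernelSpan A B) := by
    rw [← hconst _ hq]
    exact finrank_map_add_finrank_ker (ker_pencil_le_kernelSpan hq)
  have hann := Subspace.finrank_add_finrank_dualCoannihilator_eq L
  rw [← show _ = L.dualCoannihilator from kernelSpan_eq_dualCoannihilator hA hB hconst hq] at hann
  omega

end Symmetric

section AdaptedBasis

variable {𝕜 V : Type*} [DivisionRing 𝕜] [AddCommGroup V] [Module 𝕜 V]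

theorem exists_basis_sum_of_quotient {U : Submodule 𝕜 V} {ι κ : Type*} (b : Basis ι 𝕜 U)
    (c : Basis κ 𝕜 (V ⧸ U)) {y : κ → V} (hy : ∀ k, U.mkQ (y k) = c k) :
    ∃ e : Basis (ι ⊕ κ) 𝕜 V, (∀ i, e (.inl i) = b i) ∧ ∀ k, e (.inr k) = y k := by
  have hy : U.mkQ ∘ y = c := funext hy
  have hli : LinearIndependent 𝕜 (Sum.elim (b · : ι → V) y) :=
    b.linearIndependent.sumElim_of_quotient y (hy ▸ c.linearIndependent)
  have hb : Submodule.span 𝕜 (Set.range (b · : ι → V)) = U := by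
    rw [show (b · : ι → V) = U.subtype ∘ b from rfl, Set.range_comp, ← Submodule.map_span,
      b.span_eq, Submodule.map_top, Submodule.range_subtype]
  have hspan : ⊤ ≤ Submodule.span 𝕜 (Set.range (Sum.elim (b · : ι → V) y)) := by
    rw [Set.Sum.elim_range, Submodule.span_union, hb, top_le_iff, ← Submodule.map_mkQ_eq_top,
      Submodule.map_span, ← Set.range_comp, hy, c.span_eq]
  exact ⟨Basis.mk hli hspan, fun i => by simp, fun k => by simp⟩

theorem exists_basis_sum_fin [Module.Finite 𝕜 V] {ι : Type*} {v : ι → V}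
    (hv : LinearIndependent 𝕜 v) :
    ∃ (m : ℕ) (e : Basis (ι ⊕ Fin m) 𝕜 V), ∀ i, e (.inl i) = v i := by
  choose y hy using (Submodule.span 𝕜 (Set.range v)).mkQ_surjective
  obtain ⟨e, he, -⟩ := exists_basis_sum_of_quotient (Basis.span hv)
    (finBasis 𝕜 (V ⧸ Submodule.span 𝕜 (Set.range v))) fun k => hy _
  exact ⟨_, e, fun i => (he i).trans (congrArg Subtype.val (Basis.span_apply hv i))⟩

end AdaptedBasis

/-- The index set of chains of `r k + 1` vectors, split into all vectors but the last ones and the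
last ones. -/
def sigmaFinSuccEquiv {κ : Type*} (r : κ → ℕ) :
    (Σ k, Fin (r k + 1)) ≃ (Σ k, Fin (r k)) ⊕ κ where
  toFun s := Fin.lastCases (.inr s.1) (fun p => .inl ⟨s.1, p⟩) s.2
  invFun := Sum.elim (fun s => ⟨s.1, s.2.castSucc⟩) fun k => ⟨k, Fin.last _⟩
  left_inv := fun ⟨k, p⟩ => by cases p using Fin.lastCases <;> simp
  right_inv := by rintro (s | k) <;> simp

section Kronecker

variable {𝕜 W Z : Type*} [Field 𝕜] [AddCommGroup W] [Module 𝕜 W] [AddCommGroup Z] [Module 𝕜 Z]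

/-- A Kronecker normal form of the pencil spanned by `f` and `g`, without Jordan blocks and with
row minimal indices `r`: bases of the source and of the target, consisting of chains of `r i` and of
`r i + 1` vectors respectively, along which `f` preserves the position and `g` raises it by one. -/
structure KroneckerBasis (f g : W →ₗ[𝕜] Z) {ι : Type*} (r : ι → ℕ) where
  src : Basis (Σ i, Fin (r i)) 𝕜 W
  tgt : Basis (Σ i, Fin (r i + 1)) 𝕜 Z
  fst_apply : ∀ i p, f (src ⟨i, p⟩) = tgt ⟨i, p.castSucc⟩
  snd_apply : ∀ i p, g (src ⟨i, p⟩) = tgt ⟨i, p.succ⟩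

namespace KroneckerBasis

variable {f g : W →ₗ[𝕜] Z} {ι κ : Type*} {r : ι → ℕ}

/-- The same normal form, with its chains listed in the order given by `e`. -/
noncomputable def reindex (S : KroneckerBasis f g r) (e : κ ≃ ι) : KroneckerBasis f g (r ∘ e) where
  src := S.src.reindex (Equiv.sigmaCongrLeft (β := fun i => Fin (r i)) e).symm
  tgt := S.tgt.reindex (Equiv.sigmaCongrLeft (β := fun i => Fin (r i + 1)) e).symm
  fst_apply i p := by simp [S.fst_apply]
  snd_apply i p := by simp [S.snd_apply]

theorem tgt_repr_fst_last (S : KroneckerBasis f g r) (x : W) (i : ι) :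
    S.tgt.repr (f x) ⟨i, Fin.last (r i)⟩ = 0 := by
  have h : S.tgt.coord ⟨i, Fin.last (r i)⟩ ∘ₗ f = 0 := S.src.ext fun ⟨j, p⟩ => by
    rw [LinearMap.comp_apply, S.fst_apply, Basis.coord_apply, Basis.repr_self]
    refine Finsupp.single_eq_of_ne fun heq => ?_
    cases (Sigma.mk.inj heq).1
    exact p.castSucc_lt_last.ne' (eq_of_heq (Sigma.mk.inj heq).2)
  exact LinearMap.congr_fun h x

end KroneckerBasis

theorem nonempty_kroneckerBasis_of_quotient {f g : W →ₗ[𝕜] Z} (hf : Function.Injective f)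
    {κ : Type*} {r : κ → ℕ} (src : Basis (Σ k, Fin (r k)) 𝕜 W) (c : Basis κ 𝕜 (Z ⧸ range f))
    {y : κ → Z} (hy : ∀ k, (range f).mkQ (y k) = c k)
    (hg : ∀ k (p : Fin (r k)) (h : (p : ℕ) + 1 < r k), g (src ⟨k, p⟩) = f (src ⟨k, p + 1, h⟩))
    (hgy : ∀ k (p : Fin (r k)), (p : ℕ) + 1 = r k → g (src ⟨k, p⟩) = y k) :
    Nonempty (KroneckerBasis f g r) := by
  obtain ⟨e, hinl, hinr⟩ :=
    exists_basis_sum_of_quotient (src.map (LinearEquiv.ofInjective f hf)) c hy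
  have hcast : ∀ k p, e.reindex (sigmaFinSuccEquiv r).symm ⟨k, p.castSucc⟩ = f (src ⟨k, p⟩) :=
    fun k p => by simp [sigmaFinSuccEquiv, hinl]
  have hlast : ∀ k, e.reindex (sigmaFinSuccEquiv r).symm ⟨k, Fin.last (r k)⟩ = y k :=
    fun k => by simp [sigmaFinSuccEquiv, hinr]
  refine ⟨⟨src, e.reindex (sigmaFinSuccEquiv r).symm, fun k p => (hcast k p).symm, fun k p => ?_⟩⟩
  rcases Nat.lt_or_eq_of_le p.2 with h | h
  · exact (hg k p h).trans (hcast k ⟨p + 1, h⟩).symm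
  · rw [hgy k p h, ← hlast, show p.succ = Fin.last (r k) from Fin.ext h]

theorem injective_pencil_comap_range {f g : W →ₗ[𝕜] Z}
    (hfg : ∀ p ≠ 0, Function.Injective (pencil f g p)) {g' : (range f).comap g →ₗ[𝕜] W}
    (hg' : ∀ x, f (g' x) = g x) {p : 𝕜 × 𝕜} (hp : p ≠ 0) :
    Function.Injective (pencil ((range f).comap g).subtype g' p) := by
  refine (injective_iff_map_eq_zero _).2 fun x hx => Subtype.ext ?_
  exact (injective_iff_map_eq_zero _).1 (hfg p hp) x <| by
    simpa [hg'] using congrArg f hx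

theorem KroneckerBasis.linearIndependent_mkQ_snd_last {f g : W →ₗ[𝕜] Z}
    {g' : (range f).comap g →ₗ[𝕜] W} {ι : Type*} {r : ι → ℕ}
    (S : KroneckerBasis ((range f).comap g).subtype g' r) :
    LinearIndependent 𝕜 fun i => (range f).mkQ (g (S.tgt ⟨i, Fin.last (r i)⟩)) := by
  classical
  rw [linearIndependent_iff']
  intro t a ha i hi
  have hmem : ∑ i ∈ t, a i • S.tgt ⟨i, Fin.last (r i)⟩ ∈ (range f).comap g := by
    rw [Submodule.mem_comap, ← Submodule.Quotient.mk_eq_zero, ← Submodule.mkQ_apply]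
    simpa only [map_sum, map_smul] using ha
  have hinj : Function.Injective fun i => (⟨i, Fin.last (r i)⟩ : Σ i, Fin (r i + 1)) :=
    fun _ _ heq => (Sigma.mk.inj heq).1
  simpa [Finsupp.single_apply, hinj.eq_iff, hi] using S.tgt_repr_fst_last ⟨_, hmem⟩ i

/- Each chain of `(range f).comap g` in `W` grows by one vector, the image under `g` of its last
vector; a basis of the rest of `Z ⧸ range f` gives the chains of length zero. -/
theorem KroneckerBasis.exists_of_comap_range [FiniteDimensional 𝕜 Z] {f g : W →ₗ[𝕜] Z}
    (hf : Function.Injective f) {g' : (range f).comap g →ₗ[𝕜] W} (hg' : ∀ x, f (g' x) = g x)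
    {n : ℕ} {r : Fin n → ℕ} (S : KroneckerBasis ((range f).comap g).subtype g' r) :
    ∃ (m : ℕ) (r' : Fin m → ℕ), Nonempty (KroneckerBasis f g r') := by
  obtain ⟨m, c, hc⟩ := exists_basis_sum_fin S.linearIndependent_mkQ_snd_last
  choose y hy using fun j : Fin m => (range f).mkQ_surjective (c (.inr j))
  have : IsEmpty (Σ _ : Fin m, Fin 0) := ⟨fun s => s.2.elim0⟩
  let e : (Σ k, Fin (Sum.elim (r · + 1) (fun _ : Fin m => 0) k)) ≃ Σ i, Fin (r i + 1) :=
    (Equiv.sumSigmaDistrib _).trans (Equiv.sumEmpty _ (Σ _ : Fin m, Fin 0))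
  have he : ∀ i p, S.tgt.reindex e.symm ⟨.inl i, p⟩ = S.tgt ⟨i, p⟩ :=
    fun i p => S.tgt.reindex_apply _ _
  have hchain : ∀ i (p : Fin (r i)), g (S.tgt ⟨i, p.castSucc⟩) = f (S.tgt ⟨i, p.succ⟩) :=
    fun i p => by rw [← S.fst_apply, ← S.snd_apply, hg', Submodule.subtype_apply]
  obtain ⟨T⟩ := nonempty_kroneckerBasis_of_quotient hf (S.tgt.reindex e.symm) c
    (y := Sum.elim (fun i => g (S.tgt ⟨i, Fin.last (r i)⟩)) y)
    (Sum.rec (fun i => (hc i).symm) hy)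
    (Sum.rec (fun i p h => (congrArg g (he i p)).trans <|
      (hchain i ⟨p, Nat.lt_of_succ_lt_succ h⟩).trans (congrArg f (he i ⟨p + 1, h⟩)).symm)
      fun _ p => p.elim0)
    (Sum.rec (fun i p h => (congrArg g (he i p)).trans <| by
      rw [show p = Fin.last (r i) from Fin.ext (Nat.succ_injective h), Sum.elim_inl])
      fun _ p => p.elim0)
  exact ⟨_, _, ⟨T.reindex finSumFinEquiv.symm⟩⟩

theorem exists_lift_comap_range {f g : W →ₗ[𝕜] Z} :
    ∃ g' : (range f).comap g →ₗ[𝕜] W, ∀ x, f (g' x) = g x := by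
  obtain ⟨l, hl⟩ := f.rangeRestrict.exists_rightInverse_of_surjective f.range_rangeRestrict
  refine ⟨l ∘ₗ g.restrict (p := (range f).comap g) fun _ hx => hx, fun x => ?_⟩
  exact congrArg Subtype.val (LinearMap.congr_fun hl _)

theorem exists_kroneckerBasis_subtype {𝕜 : Type*} [Field 𝕜] [IsAlgClosed 𝕜] (d : ℕ)
    {W : Type*} [AddCommGroup W] [Module 𝕜 W] [FiniteDimensional 𝕜 W]
    (hd : finrank 𝕜 W = d) (U : Submodule 𝕜 W) (g : U →ₗ[𝕜] W)
    (hg : ∀ p ≠ 0, Function.Injective (pencil U.subtype g p)) :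
    ∃ (m : ℕ) (r : Fin m → ℕ), Nonempty (KroneckerBasis U.subtype g r) := by
  induction d using Nat.strong_induction_on generalizing W with | h d ih
  rcases subsingleton_or_nontrivial U with hU | hU
  · have : IsEmpty (Σ _ : Fin (finrank 𝕜 W), Fin 0) := ⟨fun s => s.2.elim0⟩
    let tgt := (finBasis 𝕜 W).reindex (Equiv.sigmaUnique _ fun _ => Fin 1).symm
    exact ⟨_, 0, ⟨⟨Basis.empty U, tgt, fun _ p => p.elim0, fun _ p => p.elim0⟩⟩⟩
  · obtain ⟨g', hg'⟩ := exists_lift_comap_range (f := U.subtype) (g := g)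
    obtain ⟨n, r, ⟨S⟩⟩ := ih _ (hd ▸ finrank_lt_finrank_of_injective_pencil hg) rfl _ g'
      fun p hp => injective_pencil_comap_range hg hg' hp
    exact S.exists_of_comap_range U.subtype_injective hg'

theorem exists_kroneckerBasis [IsAlgClosed 𝕜] [FiniteDimensional 𝕜 W] [FiniteDimensional 𝕜 Z]
    {f g : W →ₗ[𝕜] Z} (hfg : ∀ p ≠ 0, Function.Injective (pencil f g p)) :
    ∃ (m : ℕ) (r : Fin m → ℕ), Monotone r ∧ Nonempty (KroneckerBasis f g r) := by
  have hf : Function.Injective f := by simpa [pencil] using hfg (1, 0) (by simp)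
  obtain ⟨g', hg'⟩ := exists_lift_comap_range (f := f) (g := g)
  obtain ⟨n, r, ⟨S⟩⟩ := exists_kroneckerBasis_subtype _ rfl _ g'
    fun p hp => injective_pencil_comap_range hfg hg' hp
  obtain ⟨m, r', ⟨T⟩⟩ := S.exists_of_comap_range hf hg'
  exact ⟨m, _, Tuple.monotone_sort r', ⟨T.reindex (Tuple.sort r')⟩⟩

end Kronecker

section IsotropicLift

/- By the first equation, the second one becomes the recursion
`X i p j (q + 1) = X i (p + 1) j q + β i p j q - α i (p + 1) j q`, which `F` solves. The solution of
both equations is the average of `F` and of its image under the involution that exchanges the two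
summands of the first equation. -/
theorem exists_symmetrization {𝕜 S : Type*} [Field 𝕜] [NeZero (2 : 𝕜)] {α β : S → ℕ → S → ℕ → 𝕜}
    (hα : ∀ i p j q, α i p j q = α j q i p) (hβ : ∀ i p j q, β i p j q = β j q i p) :
    ∃ X : S → ℕ → S → ℕ → 𝕜, ∀ i p j q, X j q i p + X i p j q = α i p j q ∧
      X j q i (p + 1) + X i p j (q + 1) = β i p j q := by
  let F : S → S → ℕ → ℕ → 𝕜 := fun i j q => Nat.rec (fun _ => 0)
    (fun q f p => f (p + 1) + β i p j q - α i (p + 1) j q) q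
  have hF : ∀ i j q p, F i j (q + 1) p = F i j q (p + 1) + β i p j q - α i (p + 1) j q :=
    fun i j q p => rfl
  have h2 : (2 : 𝕜) ≠ 0 := two_ne_zero
  refine ⟨fun i p j q => (F i j q p + (α j q i p - F j i p q)) / 2, fun i p j q => ⟨?_, ?_⟩⟩
  · beta_reduce
    rw [hα j q i p, ← add_div, div_eq_iff h2]
    ring
  · beta_reduce
    rw [← add_div, div_eq_iff h2, hF, hF, hβ j q i p, hα i (p + 1) j q, hα j (q + 1) i p]
    ring

variable {𝕜 V : Type*} [Field 𝕜] [AddCommGroup V] [Module 𝕜 V] {A B : LinearMap.BilinForm 𝕜 V}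

theorem exists_isotropic_lift [NeZero (2 : 𝕜)] (hA : A.IsSymm) (hB : B.IsSymm)
    {K : Submodule 𝕜 V} (hKA : ∀ x y : K, A x y = 0) (hKB : ∀ x y : K, B x y = 0)
    {ι : Type*} [Finite ι] {r : ι → ℕ} (k : Basis (Σ i, Fin (r i + 1)) 𝕜 K)
    {v : (Σ i, Fin (r i)) → V}
    (hvA : ∀ i p (y : K), A (v ⟨i, p⟩) y = k.repr y ⟨i, p.castSucc⟩)
    (hvB : ∀ i p (y : K), B (v ⟨i, p⟩) y = k.repr y ⟨i, p.succ⟩) :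
    ∃ x : (Σ i, Fin (r i)) → K, ∀ s t,
      A (v s + x s) (v t + x t) = 0 ∧ B (v s + x s) (v t + x t) = 0 := by
  classical
  let w : ι → ℕ → V := fun i p => if h : p < r i then v ⟨i, p, h⟩ else 0
  have hw : ∀ s : Σ i, Fin (r i), w s.1 s.2 = v s := fun s => dif_pos s.2.2
  obtain ⟨X, hX⟩ := exists_symmetrization (α := fun i p j q => -A (w i p) (w j q))
    (β := fun i p j q => -B (w i p) (w j q)) (fun i p j q => congrArg Neg.neg (hA.eq _ _).symm)
    fun i p j q => congrArg Neg.neg (hB.eq _ _).symm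
  let x : (Σ i, Fin (r i)) → K := fun s => k.equivFun.symm fun t => X s.1 s.2 t.1 t.2
  have hx : ∀ s t, k.repr (x s) t = X s.1 s.2 t.1 t.2 := fun s t =>
    congrFun (k.equivFun.apply_symm_apply _) t
  have hexpand : ∀ {C : LinearMap.BilinForm 𝕜 V}, C.IsSymm → (∀ x y : K, C x y = 0) → ∀ s t,
      C (v s + x s) (v t + x t) = C (v s) (v t) + (C (v s) (x t) + C (v t) (x s)) :=
    fun hC hCK s t => by
      simp only [map_add, LinearMap.add_apply, hCK, ← hC.eq (x s) (v t)]
      ring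
  refine ⟨x, fun s t => ?_⟩
  obtain ⟨hα, hβ⟩ := hX s.1 s.2 t.1 t.2
  rw [hw, hw] at hα hβ
  constructor
  · rw [hexpand hA hKA, hvA s.1 s.2, hvA t.1 t.2, hx, hx, Fin.val_castSucc, Fin.val_castSucc]
    linear_combination hα
  · rw [hexpand hB hKB, hvB s.1 s.2, hvB t.1 t.2, hx, hx, Fin.val_succ, Fin.val_succ]
    linear_combination hβ

end IsotropicLift

/-- The symmetric block matrix with zero diagonal blocks and off-diagonal blocks `M` and `Mᵀ`. -/
def hyperbolicMatrix {R m n : Type*} [Zero R] (M : Matrix m n R) : Matrix (m ⊕ n) (m ⊕ n) R :=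
  fromBlocks 0 M Mᵀ 0

section KroneckerMatrix

variable (𝕜 : Type*) [Zero 𝕜] [One 𝕜] {ι : Type*} [DecidableEq ι] (r : ι → ℕ)

/-- The direct sum of the `r i × (r i + 1)` matrices `(I | 0)`: the matrix of the first member of a
pencil in Kronecker normal form with row minimal indices `r`. -/
def kroneckerFst : Matrix (Σ i, Fin (r i)) (Σ i, Fin (r i + 1)) 𝕜 :=
  of fun s t => if t = ⟨s.1, s.2.castSucc⟩ then 1 else 0

/-- The direct sum of the `r i × (r i + 1)` matrices `(0 | I)`: the matrix of the second member of a
pencil in Kronecker normal form with row minimal indices `r`. -/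
def kroneckerSnd : Matrix (Σ i, Fin (r i)) (Σ i, Fin (r i + 1)) 𝕜 :=
  of fun s t => if t = ⟨s.1, s.2.succ⟩ then 1 else 0

end KroneckerMatrix

section CanonicalMatrix

variable {h : ℕ} (r : Fin h → ℕ)

/-- The concatenation, inside each block of the canonical pencil, of a chain of `r i` indices and a
chain of `r i + 1` indices. -/
def chainsEquivPencilIdx : (Σ i, Fin (r i)) ⊕ (Σ i, Fin (r i + 1)) ≃ PencilIdx h r :=
  (Equiv.sigmaSumDistrib _ _).symm.trans <|
    Equiv.sigmaCongrRight fun i => finSumFinEquiv.trans (finCongr (by omega))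

/-- The canonical matrix `𝒜` over arbitrary coefficients, as the block matrix with off-diagonal
blocks `(I | 0)` and its transpose, in the block order of the canonical pencil. -/
def canonicalFst (𝕜 : Type*) [Zero 𝕜] [One 𝕜] : Matrix (PencilIdx h r) (PencilIdx h r) 𝕜 :=
  reindex (chainsEquivPencilIdx r) (chainsEquivPencilIdx r) (hyperbolicMatrix (kroneckerFst 𝕜 r))

/-- The canonical matrix `ℬ` over arbitrary coefficients, as the block matrix with off-diagonal
blocks `(0 | I)` and its transpose, in the block order of the canonical pencil. -/
def canonicalSnd (𝕜 : Type*) [Zero 𝕜] [One 𝕜] : Matrix (PencilIdx h r) (PencilIdx h r) 𝕜 :=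
  reindex (chainsEquivPencilIdx r) (chainsEquivPencilIdx r) (hyperbolicMatrix (kroneckerSnd 𝕜 r))

theorem sigma_fin_ext_iff {ι : Type*} {n : ι → ℕ} {s t : Σ i, Fin (n i)} :
    s = t ↔ s.1 = t.1 ∧ (s.2 : ℕ) = t.2 := by
  refine ⟨fun h => h ▸ ⟨rfl, rfl⟩, fun ⟨h₁, h₂⟩ => ?_⟩
  obtain ⟨i, p⟩ := s
  obtain ⟨j, q⟩ := t
  obtain rfl : i = j := h₁
  exact congrArg _ (Fin.ext h₂)

theorem chainsEquivPencilIdx_inl (i : Fin h) (p : Fin (r i)) :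
    chainsEquivPencilIdx r (.inl ⟨i, p⟩) = ⟨i, p, by omega⟩ := rfl

theorem chainsEquivPencilIdx_inr (i : Fin h) (q : Fin (r i + 1)) :
    chainsEquivPencilIdx r (.inr ⟨i, q⟩) = ⟨i, r i + q, by omega⟩ := rfl

theorem canonicalFst_complex : canonicalFst r ℂ = canA h r := by
  rw [canonicalFst, ← Equiv.eq_symm_apply]
  ext (⟨i, p⟩ | ⟨i, p⟩) (⟨j, q⟩ | ⟨j, q⟩)
  all_goals
    simp only [hyperbolicMatrix, kroneckerFst, canA, reindex_symm, reindex_apply, submatrix_apply,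
      Equiv.symm_symm, chainsEquivPencilIdx_inl, chainsEquivPencilIdx_inr, fromBlocks_apply₁₁,
      fromBlocks_apply₁₂, fromBlocks_apply₂₁, fromBlocks_apply₂₂, transpose_apply, of_apply,
      Matrix.zero_apply, sigma_fin_ext_iff, Fin.val_castSucc]
  all_goals grind

theorem canonicalSnd_complex : canonicalSnd r ℂ = canB h r := by
  rw [canonicalSnd, ← Equiv.eq_symm_apply]
  ext (⟨i, p⟩ | ⟨i, p⟩) (⟨j, q⟩ | ⟨j, q⟩)
  all_goals
    simp only [hyperbolicMatrix, kroneckerSnd, canB, reindex_symm, reindex_apply, submatrix_apply,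
      Equiv.symm_symm, chainsEquivPencilIdx_inl, chainsEquivPencilIdx_inr, fromBlocks_apply₁₁,
      fromBlocks_apply₁₂, fromBlocks_apply₂₁, fromBlocks_apply₂₂, transpose_apply, of_apply,
      Matrix.zero_apply, sigma_fin_ext_iff, Fin.val_succ]
  all_goals grind

end CanonicalMatrix

section Assembly

variable {𝕜 V : Type*} [Field 𝕜] [AddCommGroup V] [Module 𝕜 V] {A B : LinearMap.BilinForm 𝕜 V}

theorem exists_basis_coord_eq [FiniteDimensional 𝕜 V] {ι : Type*} [Finite ι]
    (z : Basis ι 𝕜 (Dual 𝕜 V)) : ∃ k : Basis ι 𝕜 V, ∀ i, k.coord i = z i := by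
  classical
  refine ⟨z.dualBasis.map (evalEquiv 𝕜 V).symm, fun i => ?_⟩
  refine (z.dualBasis.map (evalEquiv 𝕜 V).symm).ext fun j => ?_
  rw [Basis.coord_apply, Basis.repr_self]
  simp [Finsupp.single_apply, eq_comm]

theorem toMatrix_eq_hyperbolicMatrix (hA : A.IsSymm) {m n : Type*} [Fintype m] [Fintype n]
    [DecidableEq m] [DecidableEq n] (e : Basis (m ⊕ n) 𝕜 V) {M : Matrix m n 𝕜}
    (hinl : ∀ s t, A (e (.inl s)) (e (.inl t)) = 0) (hinr : ∀ s t, A (e (.inr s)) (e (.inr t)) = 0)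
    (hM : ∀ s t, A (e (.inl s)) (e (.inr t)) = M s t) :
    LinearMap.BilinForm.toMatrix e A = hyperbolicMatrix M := by
  ext (s | s) (t | t) <;> rw [LinearMap.BilinForm.toMatrix_apply]
  exacts [hinl s t, hM s t, (hA.eq _ _).symm.trans (hM t s), hinr s t]

variable {K : Submodule 𝕜 V}

/- Lift the chains of `V ⧸ K` isotropically to `V` and add the basis of `K` dual to the chains of
`Dual 𝕜 K`. -/
theorem KroneckerBasis.exists_basis_toMatrix_eq_hyperbolicMatrix [NeZero (2 : 𝕜)]
    [FiniteDimensional 𝕜 V] (hA : A.IsSymm) (hB : B.IsSymm)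
    (hKA : K ≤ ker (K.dualRestrict ∘ₗ A)) (hKB : K ≤ ker (K.dualRestrict ∘ₗ B))
    {ι : Type*} [Fintype ι] [DecidableEq ι] {r : ι → ℕ}
    (S : KroneckerBasis (K.liftQ _ hKA) (K.liftQ _ hKB) r) :
    ∃ e : Basis ((Σ i, Fin (r i)) ⊕ (Σ i, Fin (r i + 1))) 𝕜 V,
      LinearMap.BilinForm.toMatrix e A = hyperbolicMatrix (kroneckerFst 𝕜 r) ∧
      LinearMap.BilinForm.toMatrix e B = hyperbolicMatrix (kroneckerSnd 𝕜 r) := by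
  obtain ⟨k, hk⟩ := exists_basis_coord_eq S.tgt
  choose v hv using fun s => K.mkQ_surjective (S.src s)
  have hvA : ∀ i p (y : K), A (v ⟨i, p⟩) y = k.repr y ⟨i, p.castSucc⟩ := fun i p y => by
    rw [← k.coord_apply, hk, ← S.fst_apply, ← hv]
    rfl
  have hvB : ∀ i p (y : K), B (v ⟨i, p⟩) y = k.repr y ⟨i, p.succ⟩ := fun i p y => by
    rw [← k.coord_apply, hk, ← S.snd_apply, ← hv]
    rfl
  have hAK : ∀ x y : K, A x y = 0 := fun x y => LinearMap.congr_fun (hKA x.2) y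
  have hBK : ∀ x y : K, B x y = 0 := fun x y => LinearMap.congr_fun (hKB x.2) y
  obtain ⟨x, hx⟩ := exists_isotropic_lift hA hB hAK hBK k hvA hvB
  obtain ⟨e, hinl, hinr⟩ := exists_basis_sum_of_quotient k S.src (y := fun s => v s + x s)
    fun s => by
      rw [map_add, hv, Submodule.mkQ_apply K (x s), (Submodule.Quotient.mk_eq_zero K).2 (x s).2,
        add_zero]
  have hsrc : ∀ s, e.reindex (Equiv.sumComm _ _) (.inl s) = v s + x s := fun s => by simp [hinr]
  have htgt : ∀ t, e.reindex (Equiv.sumComm _ _) (.inr t) = k t := fun t => by simp [hinl]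
  refine ⟨e.reindex (Equiv.sumComm _ _),
    toMatrix_eq_hyperbolicMatrix hA _ (fun s t => ?_) (fun s t => ?_) fun s t => ?_,
    toMatrix_eq_hyperbolicMatrix hB _ (fun s t => ?_) (fun s t => ?_) fun s t => ?_⟩
  · rw [hsrc, hsrc, (hx s t).1]
  · rw [htgt, htgt, hAK]
  · rw [hsrc, htgt, map_add, LinearMap.add_apply, hAK, hvA s.1 s.2, k.repr_self, add_zero]
    exact Finsupp.single_apply
  · rw [hsrc, hsrc, (hx s t).2]
  · rw [htgt, htgt, hBK]
  · rw [hsrc, htgt, map_add, LinearMap.add_apply, hBK, hvB s.1 s.2, k.repr_self, add_zero]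
    exact Finsupp.single_apply

theorem le_ker_dualRestrict_comp_iff :
    K ≤ ker (K.dualRestrict ∘ₗ A) ↔ ∀ x ∈ K, ∀ y ∈ K, A x y = 0 := by
  simp [SetLike.le_def, LinearMap.ext_iff]

theorem injective_pencil_liftQ_kernelSpan [IsAlgClosed 𝕜] [FiniteDimensional 𝕜 V] {h : ℕ}
    (hA : A.IsSymm) (hB : B.IsSymm) (hconst : ∀ p ≠ 0, finrank 𝕜 (ker (pencil A B p)) = h)
    (hKA : kernelSpan A B ≤ ker ((kernelSpan A B).dualRestrict ∘ₗ A))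
    (hKB : kernelSpan A B ≤ ker ((kernelSpan A B).dualRestrict ∘ₗ B)) {p : 𝕜 × 𝕜} (hp : p ≠ 0) :
    Function.Injective
      (pencil ((kernelSpan A B).liftQ _ hKA) ((kernelSpan A B).liftQ _ hKB) p) := by
  refine (injective_iff_map_eq_zero _).2 fun x hx => ?_
  obtain ⟨v, rfl⟩ := Submodule.Quotient.mk_surjective _ x
  refine (Submodule.Quotient.mk_eq_zero _).2
    (mem_kernelSpan_of_forall_pencil_apply_eq_zero hA hB hconst hp fun k hk => ?_)
  exact LinearMap.congr_fun hx ⟨k, hk⟩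

theorem exists_basis_toMatrix_eq_hyperbolicMatrix [IsAlgClosed 𝕜] [NeZero (2 : 𝕜)]
    [FiniteDimensional 𝕜 V] {h : ℕ} (hA : A.IsSymm) (hB : B.IsSymm)
    (hconst : ∀ p ≠ 0, finrank 𝕜 (ker (pencil A B p)) = h) :
    ∃ r : Fin h → ℕ, Monotone r ∧ 2 * ∑ i, r i + h = finrank 𝕜 V ∧
      ∃ e : Basis ((Σ i, Fin (r i)) ⊕ (Σ i, Fin (r i + 1))) 𝕜 V,
        LinearMap.BilinForm.toMatrix e A = hyperbolicMatrix (kroneckerFst 𝕜 r) ∧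
        LinearMap.BilinForm.toMatrix e B = hyperbolicMatrix (kroneckerSnd 𝕜 r) := by
  have : Infinite 𝕜 := IsAlgClosed.instInfinite
  have hiso := fun x hx y hy =>
    pencil_apply_eq_zero_of_mem_kernelSpan (x := x) (y := y) hA hB hconst hx hy
  have hKA := (le_ker_dualRestrict_comp_iff (A := A) (K := kernelSpan A B)).2 fun x hx y hy => by
    simpa using hiso x hx y hy (1, 0)
  have hKB := (le_ker_dualRestrict_comp_iff (A := B) (K := kernelSpan A B)).2 fun x hx y hy => by
    simpa using hiso x hx y hy (0, 1)
  obtain ⟨m, r, hr, ⟨S⟩⟩ := exists_kroneckerBasis fun p hp =>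
    injective_pencil_liftQ_kernelSpan hA hB hconst hKA hKB hp
  have hK : finrank 𝕜 (kernelSpan A B) = ∑ i, r i + m := by
    rw [← Subspace.dual_finrank_eq, finrank_eq_card_basis S.tgt]
    simp [Finset.sum_add_distrib]
  have hVK : finrank 𝕜 (V ⧸ kernelSpan A B) = ∑ i, r i := by
    rw [finrank_eq_card_basis S.src]
    simp
  have hV := (kernelSpan A B).finrank_quotient_add_finrank
  have htwo := two_mul_finrank_kernelSpan hA hB hconst
  obtain rfl : m = h := by omega
  exact ⟨r, hr, by omega, S.exists_basis_toMatrix_eq_hyperbolicMatrix hA hB hKA hKB⟩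

theorem one_le_of_toMatrix_eq_hyperbolicMatrix {ι : Type*} [Fintype ι] [DecidableEq ι] {r : ι → ℕ}
    (hAB : ∀ v, A v = 0 → B v = 0 → v = 0)
    {e : Basis ((Σ i, Fin (r i)) ⊕ (Σ i, Fin (r i + 1))) 𝕜 V}
    (heA : LinearMap.BilinForm.toMatrix e A = hyperbolicMatrix (kroneckerFst 𝕜 r))
    (heB : LinearMap.BilinForm.toMatrix e B = hyperbolicMatrix (kroneckerSnd 𝕜 r)) (i : ι) :
    1 ≤ r i := by
  by_contra! hi
  have key : ∀ {C : LinearMap.BilinForm 𝕜 V} {M : Matrix (Σ i, Fin (r i)) (Σ i, Fin (r i + 1)) 𝕜},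
      LinearMap.BilinForm.toMatrix e C = hyperbolicMatrix M → (∀ s, M s ⟨i, 0⟩ = 0) →
      C (e (.inr ⟨i, 0⟩)) = 0 := fun {C M} hC hM => e.ext fun j => by
    rw [← LinearMap.BilinForm.toMatrix_apply, hC]
    rcases j with s | t
    exacts [hM s, rfl]
  have hne : ∀ s : Σ i, Fin (r i), s.1 ≠ i := fun s hs => by have := s.2.2; grind
  exact e.ne_zero (.inr ⟨i, 0⟩) <| hAB _
    (key heA fun s => if_neg fun hs => hne s (Sigma.mk.inj hs).1.symm)
    (key heB fun s => if_neg fun hs => hne s (Sigma.mk.inj hs).1.symm)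

end Assembly

section Congruence

variable {𝕜 ι : Type*} [Field 𝕜] [Fintype ι] [DecidableEq ι] {A B : Matrix ι ι 𝕜}

theorem ker_toBilin'_of_isSymm (hA : A.IsSymm) : ker A.toBilin' = ker A.mulVecLin := by
  ext v
  rw [mem_ker, mem_ker, mulVecLin_apply, ← vecMul_transpose, hA.eq]
  simp only [LinearMap.ext_iff, toBilin'_apply', dotProduct_mulVec, LinearMap.zero_apply]
  exact dotProduct_eq_zero_iff

theorem rank_add_finrank_ker_toBilin' (hA : A.IsSymm) :
    A.rank + finrank 𝕜 (ker A.toBilin') = Fintype.card ι := by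
  rw [ker_toBilin'_of_isSymm hA, Matrix.rank, finrank_range_add_finrank_ker, finrank_pi]

theorem pencil_toBilin' (A B : Matrix ι ι 𝕜) (p : 𝕜 × 𝕜) :
    pencil A.toBilin' B.toBilin' p = (p.1 • A + p.2 • B).toBilin' := by
  rw [map_add, map_smul, map_smul]
  rfl

theorem reindex_toMatrix {V κ κ' : Type*} [AddCommGroup V] [Module 𝕜 V] [Fintype κ]
    [DecidableEq κ] [Fintype κ'] [DecidableEq κ'] (e : Basis κ 𝕜 V) (f : κ ≃ κ')
    (A : LinearMap.BilinForm 𝕜 V) :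
    LinearMap.BilinForm.toMatrix (e.reindex f) A =
      reindex f f (LinearMap.BilinForm.toMatrix e A) := by
  ext
  simp [LinearMap.BilinForm.toMatrix_apply]

theorem toMatrix_mul_toBilin' {κ : Type*} [Fintype κ] [DecidableEq κ] (e : Basis κ 𝕜 (ι → 𝕜)) :
    ((Pi.basisFun 𝕜 ι).toMatrix e)ᵀ * A * (Pi.basisFun 𝕜 ι).toMatrix e =
      LinearMap.BilinForm.toMatrix e A.toBilin' := by
  rw [← LinearMap.BilinForm.toMatrix_mul_basis_toMatrix (Pi.basisFun 𝕜 ι),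
    LinearMap.BilinForm.toMatrix_basisFun, LinearMap.BilinForm.toMatrix'_toBilin']

theorem pencil_congruent_to_canonical_general [IsAlgClosed 𝕜] [NeZero (2 : 𝕜)] {h : ℕ}
    (hA : A.IsSymm) (hB : B.IsSymm)
    (hrank : ∀ a b : 𝕜, ¬(a = 0 ∧ b = 0) → (a • A + b • B).rank + h = Fintype.card ι)
    (hker : ∀ v : ι → 𝕜, A *ᵥ v = 0 → B *ᵥ v = 0 → v = 0) :
    ∃ r : Fin h → ℕ, Monotone r ∧ (∀ i, 1 ≤ r i) ∧ 2 * ∑ i, r i + h = Fintype.card ι ∧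
      ∃ (P : Matrix ι (PencilIdx h r) 𝕜) (Q : Matrix (PencilIdx h r) ι 𝕜),
        P * Q = 1 ∧ Q * P = 1 ∧
        Pᵀ * A * P = canonicalFst r 𝕜 ∧ Pᵀ * B * P = canonicalSnd r 𝕜 := by
  obtain ⟨r, hr, hsum, e, heA, heB⟩ := exists_basis_toMatrix_eq_hyperbolicMatrix (h := h)
    (isSymm_toBilin'_iff_isSymm.2 hA) (isSymm_toBilin'_iff_isSymm.2 hB) fun p hp => by
    rw [pencil_toBilin']
    have hne : ¬(p.1 = 0 ∧ p.2 = 0) := fun h => hp (Prod.ext h.1 h.2)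
    have hcard := rank_add_finrank_ker_toBilin' ((hA.smul p.1).add (hB.smul p.2))
    exact Nat.add_left_cancel (hcard.trans (hrank _ _ hne).symm)
  have hpos := one_le_of_toMatrix_eq_hyperbolicMatrix (fun v hvA hvB => hker v
    (ker_toBilin'_of_isSymm hA |>.le hvA) (ker_toBilin'_of_isSymm hB |>.le hvB)) heA heB
  let e' := e.reindex (chainsEquivPencilIdx r)
  refine ⟨r, hr, hpos, by rw [hsum, finrank_pi], (Pi.basisFun 𝕜 ι).toMatrix e',
    e'.toMatrix (Pi.basisFun 𝕜 ι), ?_, ?_, ?_, ?_⟩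
  · exact Basis.toMatrix_mul_toMatrix_flip _ _
  · exact Basis.toMatrix_mul_toMatrix_flip _ _
  · rw [toMatrix_mul_toBilin', reindex_toMatrix, heA, canonicalFst]
  · rw [toMatrix_mul_toBilin', reindex_toMatrix, heB, canonicalSnd]

end Congruence

/-- Every non-degenerate pencil of complex symmetric matrices of
constant rank `2r` is, up to congruence, the canonical pencil of some partition
`(r₁, …, r_h)` of `r` with `h = N + 1 - 2r`. -/
theorem pencil_congruent_to_canonical
    (N r : ℕ) (hN : 2 ≤ N) (hr : 1 ≤ r)
    (A B : Matrix (Fin (N + 1)) (Fin (N + 1)) ℂ)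
    (hAsymm : A.IsSymm) (hBsymm : B.IsSymm)
    (hrank : ∀ a b : ℂ, ¬(a = 0 ∧ b = 0) → (a • A + b • B).rank = 2 * r)
    (hker : ∀ v : Fin (N + 1) → ℂ, A.mulVec v = 0 → B.mulVec v = 0 → v = 0)
    (hspan : LinearMap.range A.mulVecLin ⊔ LinearMap.range B.mulVecLin = ⊤) :
    ∃ rr : Fin (N + 1 - 2 * r) → ℕ, Monotone rr ∧ (∀ i, 1 ≤ rr i) ∧ (∑ i, rr i = r) ∧
      ∃ (P : Matrix (Fin (N + 1)) (PencilIdx (N + 1 - 2 * r) rr) ℂ)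
        (Q : Matrix (PencilIdx (N + 1 - 2 * r) rr) (Fin (N + 1)) ℂ),
        P * Q = 1 ∧ Q * P = 1 ∧
        Submodule.span ℂ {Pᵀ * A * P, Pᵀ * B * P} =
          Submodule.span ℂ {canA (N + 1 - 2 * r) rr, canB (N + 1 - 2 * r) rr} := by
  have hle : 2 * r ≤ N + 1 := by
    simpa only [hrank 1 0 (by simp), Fintype.card_fin] using
      rank_le_card_height ((1 : ℂ) • A + (0 : ℂ) • B)
  obtain ⟨rr, hmono, hpos, hsum, P, Q, hPQ, hQP, hA, hB⟩ :=
    pencil_congruent_to_canonical_general (h := N + 1 - 2 * r) hAsymm hBsymm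
      (fun a b hab => by rw [hrank a b hab, Fintype.card_fin, Nat.add_sub_cancel' hle]) hker
  rw [Fintype.card_fin] at hsum
  refine ⟨rr, hmono, hpos, by omega, P, Q, hPQ, hQP, ?_⟩
  rw [hA, hB, canonicalFst_complex, canonicalSnd_complex]
end

section
/- Let h ≥ 1 and 1 ≤ r₁ ≤ r₂ ≤ … ≤ r_h be integers, r = r₁ + … + r_h, N = 2r + h − 1, and let 𝒜, ℬ be the canonical matrices associated to the partition (r₁,…,r_h). Then: (i) rank(a•𝒜 + b•ℬ) = 2r for every (a,b) ∈ ℂ² with (a,b) ≠ (0,0); (ii) ker 𝒜 ∩ ker ℬ = {0}; and (iii) the column spaces of 𝒜 and ℬ together span ℂ^{N+1}. In particular, for every r ≥ 1 and every N with 2r ≤ N ≤ 3r − 1 there exists a non-degenerate pencil of complex symmetric matrices of size N+1 and constant rank 2r. -/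
open Matrix

/-!
Listing in each block the indices `p < rᵢ` before the indices `p ≥ rᵢ` brings the pencil `a𝒜 + bℬ`
into the form `[[0, M], [Mᵀ, 0]]`, where `M` is block diagonal with blocks the `rᵢ × (rᵢ + 1)`
bidiagonal matrices `a[I | 0] + b[0 | I]`. The row vector `x M` lists the coefficients of the
polynomial `(a + bt) x(t)` in each block, so for `(a, b) ≠ (0, 0)` the rows of `M` are independent
and the rank is `2 ∑ rᵢ`. Since the pencil is symmetric, its column spaces span as soon as the
common kernel vanishes. A partition of `r` into `h` parts gives a pencil of size `2r + h`, and `h`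
takes all values from `1` to `r`.
-/

section Pencil

variable {R l m n o : Type*} [CommRing R] [Fintype n]

/-- The pencil spanned by `A` and `B` has constant rank `k`: all its nonzero parameters
`(a, b)` give a matrix of rank `k`. -/
def HasConstantRank (A B : Matrix m n R) (k : ℕ) : Prop :=
  ∀ a b : R, ¬(a = 0 ∧ b = 0) → (a • A + b • B).rank = k

/-- The pencil spanned by `A` and `B` is non-degenerate: the two kernels meet trivially and the two
column spaces span the whole space. -/
def IsNondegeneratePencil (A B : Matrix m n R) : Prop :=
  (∀ v : n → R, A *ᵥ v = 0 → B *ᵥ v = 0 → v = 0) ∧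
    LinearMap.range A.mulVecLin ⊔ LinearMap.range B.mulVecLin = ⊤

theorem HasConstantRank.submatrix [Fintype o] {A B : Matrix m n R} {k : ℕ}
    (h : HasConstantRank A B k) (e₁ : l ≃ m) (e₂ : o ≃ n) :
    HasConstantRank (A.submatrix e₁ e₂) (B.submatrix e₁ e₂) k := fun a b hab =>
  (rank_submatrix (a • A + b • B) e₁ e₂).trans (h a b hab)

theorem IsNondegeneratePencil.submatrix [Fintype o] {A B : Matrix m n R}
    (h : IsNondegeneratePencil A B) (e₁ : l ≃ m) (e₂ : o ≃ n) :
    IsNondegeneratePencil (A.submatrix e₁ e₂) (B.submatrix e₁ e₂) := by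
  constructor
  · intro v hA hB
    rw [submatrix_mulVec_equiv] at hA hB
    have hv : v ∘ e₂.symm = 0 := h.1 _
      (e₁.surjective.injective_comp_right hA) (e₁.surjective.injective_comp_right hB)
    exact e₂.symm.surjective.injective_comp_right hv
  · have range_submatrix (M : Matrix m n R) : LinearMap.range (M.submatrix e₁ e₂).mulVecLin =
        (LinearMap.range M.mulVecLin).map (LinearEquiv.funCongrLeft R R e₁).toLinearMap := by
      rw [mulVecLin_submatrix, ← LinearMap.comp_assoc]
      exact (LinearMap.range_comp_of_range_eq_top _
        (LinearEquiv.funCongrLeft R R e₂.symm).range).trans (LinearMap.range_comp _ _)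
    rw [range_submatrix, range_submatrix, ← Submodule.map_sup, h.2, Submodule.map_top,
      LinearEquiv.range]

variable {K : Type*} [Field K]

theorem range_mulVecLin_sup_range_mulVecLin_eq_top [Fintype m] (A B : Matrix m n K)
    (h : ∀ x : m → K, x ᵥ* A = 0 → x ᵥ* B = 0 → x = 0) :
    LinearMap.range A.mulVecLin ⊔ LinearMap.range B.mulVecLin = ⊤ := by
  classical
  by_contra hne
  obtain ⟨f, hf, hle⟩ := Submodule.exists_le_ker_of_lt_top _ (lt_top_iff_ne_top.2 hne)
  obtain ⟨x, rfl⟩ := (dotProductEquiv K m).surjective f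
  have vecMul_eq_zero (M : Matrix m n K)
      (hM : LinearMap.range M.mulVecLin ≤ LinearMap.ker (dotProductEquiv K m x)) : x ᵥ* M = 0 :=
    dotProduct_eq_zero _ fun w => by
      rw [← dotProduct_mulVec]
      exact hM ⟨w, rfl⟩
  apply hf
  rw [h x (vecMul_eq_zero A (le_sup_left.trans hle)) (vecMul_eq_zero B (le_sup_right.trans hle)),
    map_zero]

theorem isNondegeneratePencil_of_isSymm {A B : Matrix n n K} (hA : A.IsSymm) (hB : B.IsSymm)
    (h : ∀ v : n → K, A *ᵥ v = 0 → B *ᵥ v = 0 → v = 0) : IsNondegeneratePencil A B :=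
  ⟨h, range_mulVecLin_sup_range_mulVecLin_eq_top A B fun x hxA hxB => h x
    (by rwa [← vecMul_transpose, hA.eq]) (by rwa [← vecMul_transpose, hB.eq])⟩

theorem rank_eq_card_of_vecMul_injective [Fintype m] {M : Matrix m n K}
    (h : Function.Injective M.vecMul) : M.rank = Fintype.card m :=
  (vecMul_injective_iff.1 h).rank_matrix

end Pencil

section Symmetrization

variable {R l m n o : Type*} [CommRing R]

/-- The symmetric matrix `[[0, M], [Mᵀ, 0]]` of a rectangular matrix `M`. It turns a pencil of
rectangular matrices into a pencil of symmetric ones. -/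
def symmetrization (M : Matrix m n R) : Matrix (m ⊕ n) (m ⊕ n) R :=
  fromBlocks 0 M Mᵀ 0

theorem isSymm_symmetrization (M : Matrix m n R) : (symmetrization M).IsSymm :=
  IsSymm.fromBlocks isSymm_zero rfl isSymm_zero

theorem smul_symmetrization_add_smul_symmetrization (a b : R) (A B : Matrix m n R) :
    a • symmetrization A + b • symmetrization B = symmetrization (a • A + b • B) := by
  simp [symmetrization, fromBlocks_smul, fromBlocks_add]

theorem symmetrization_mulVec_sumElim [Fintype m] [Fintype n] (M : Matrix m n R) (x : m → R)
    (y : n → R) :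
    symmetrization M *ᵥ Sum.elim x y = Sum.elim (M *ᵥ y) (x ᵥ* M) := by
  simp [symmetrization, fromBlocks_mulVec, mulVec_transpose]

variable {K : Type*} [Field K]

theorem finrank_submodule_prod {V W : Type*} [AddCommGroup V] [Module K V] [AddCommGroup W]
    [Module K W] (p : Submodule K V) (q : Submodule K W) [Module.Finite K p] [Module.Finite K q] :
    Module.finrank K (p.prod q) = Module.finrank K p + Module.finrank K q := by
  have hrange : p.prod q = LinearMap.range (p.subtype.prodMap q.subtype) := by
    rw [LinearMap.range_prodMap, p.range_subtype, q.range_subtype]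
  rw [hrange, LinearMap.finrank_range_of_inj, Module.finrank_prod]
  exact Prod.map_injective.2 ⟨p.injective_subtype, q.injective_subtype⟩

theorem rank_fromBlocks_diagonal [Fintype m] [Fintype n] (A : Matrix l m K) (D : Matrix o n K) :
    (fromBlocks A 0 0 D).rank = A.rank + D.rank := by
  let e := LinearEquiv.sumArrowLequivProdArrow l o K K
  let e' := LinearEquiv.sumArrowLequivProdArrow m n K K
  have hconj : (fromBlocks A 0 0 D).mulVecLin =
      e.symm.toLinearMap ∘ₗ A.mulVecLin.prodMap D.mulVecLin ∘ₗ e'.toLinearMap := by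
    refine LinearMap.ext fun v => ?_
    rw [mulVecLin_apply, fromBlocks_mulVec, zero_mulVec, zero_mulVec, add_zero, zero_add]
    rfl
  rw [rank, hconj, LinearMap.range_comp, LinearEquiv.finrank_map_eq,
    LinearMap.range_comp_of_range_eq_top _ e'.range, LinearMap.range_prodMap,
    finrank_submodule_prod, rank, rank]

variable [Fintype m] [Fintype n]

theorem rank_symmetrization (M : Matrix m n K) : (symmetrization M).rank = 2 * M.rank := by
  have hswap : symmetrization M =
      (fromBlocks M 0 0 Mᵀ).submatrix (Equiv.refl _) (Equiv.sumComm m n) := by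
    simp [symmetrization]
  rw [hswap, rank_submatrix, rank_fromBlocks_diagonal, rank_transpose, two_mul]

theorem HasConstantRank.symmetrization {A B : Matrix m n K} {k : ℕ} (h : HasConstantRank A B k) :
    HasConstantRank (symmetrization A) (symmetrization B) (2 * k) := fun a b hab => by
  rw [smul_symmetrization_add_smul_symmetrization, rank_symmetrization, h a b hab]

theorem isNondegeneratePencil_symmetrization {A B : Matrix m n K}
    (hmulVec : ∀ y : n → K, A *ᵥ y = 0 → B *ᵥ y = 0 → y = 0)
    (hvecMul : ∀ x : m → K, x ᵥ* A = 0 → x ᵥ* B = 0 → x = 0) :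
    IsNondegeneratePencil (symmetrization A) (symmetrization B) := by
  refine isNondegeneratePencil_of_isSymm (isSymm_symmetrization A) (isSymm_symmetrization B) ?_
  intro v hA hB
  obtain ⟨x, y, rfl⟩ : ∃ x y, v = Sum.elim x y := ⟨_, _, (Sum.elim_comp_inl_inr v).symm⟩
  rw [symmetrization_mulVec_sumElim, ← Sum.elim_zero_zero, Sum.elim_eq_iff] at hA hB
  rw [hmulVec y hA.1 hB.1, hvecMul x hA.2 hB.2, Sum.elim_zero_zero]

end Symmetrization

section BlockDiagonal

variable {R ι : Type*} {m n : ι → Type*} [NonUnitalNonAssocSemiring R] [Fintype ι] [DecidableEq ι]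

theorem blockDiagonal'_mulVec_apply [∀ i, Fintype (n i)] (M : ∀ i, Matrix (m i) (n i) R)
    (y : (Σ i, n i) → R) (i : ι) (j : m i) :
    (blockDiagonal' M *ᵥ y) ⟨i, j⟩ = (M i *ᵥ fun k => y ⟨i, k⟩) j := by
  rw [mulVec, dotProduct, Fintype.sum_sigma, Fintype.sum_eq_single i]
  · simp only [blockDiagonal'_apply_eq, mulVec, dotProduct]
  · intro i' hi'
    simp only [blockDiagonal'_apply_ne M _ _ hi'.symm, zero_mul, Finset.sum_const_zero]

theorem vecMul_blockDiagonal'_apply [∀ i, Fintype (m i)] (M : ∀ i, Matrix (m i) (n i) R)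
    (x : (Σ i, m i) → R) (i : ι) (k : n i) :
    (x ᵥ* blockDiagonal' M) ⟨i, k⟩ = ((fun j => x ⟨i, j⟩) ᵥ* M i) k := by
  rw [vecMul, dotProduct, Fintype.sum_sigma, Fintype.sum_eq_single i]
  · simp only [blockDiagonal'_apply_eq, vecMul, dotProduct]
  · intro i' hi'
    simp only [blockDiagonal'_apply_ne M _ _ hi', mul_zero, Finset.sum_const_zero]

theorem vecMul_blockDiagonal'_injective [∀ i, Fintype (m i)] {M : ∀ i, Matrix (m i) (n i) R}
    (h : ∀ i, Function.Injective (M i).vecMul) : Function.Injective (blockDiagonal' M).vecMul := by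
  intro x x' hx
  ext ⟨i, j⟩
  refine congrFun (@h i (fun j => x ⟨i, j⟩) (fun j => x' ⟨i, j⟩) ?_) j
  ext k
  simpa only [vecMul_blockDiagonal'_apply] using congrFun hx ⟨i, k⟩

end BlockDiagonal

section Shift

variable (R : Type*) [CommRing R]

/-- The `n × (n + 1)` matrix with ones in the positions `(j, j + s)`: it is `[I | 0]` for `s = 0`
and `[0 | I]` for `s = 1`. These are the blocks of the canonical pencil. -/
def shiftMatrix (n s : ℕ) : Matrix (Fin n) (Fin (n + 1)) R :=
  of fun j k => if (k : ℕ) = j + s then 1 else 0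

variable {R} {n : ℕ}

theorem shiftMatrix_zero_apply (j : Fin n) (k : Fin (n + 1)) :
    shiftMatrix R n 0 j k = if k = j.castSucc then 1 else 0 := by
  simp only [shiftMatrix, of_apply, Fin.ext_iff, Fin.val_castSucc, add_zero]

theorem shiftMatrix_one_apply (j : Fin n) (k : Fin (n + 1)) :
    shiftMatrix R n 1 j k = if k = j.succ then 1 else 0 := by
  simp only [shiftMatrix, of_apply, Fin.ext_iff, Fin.val_succ]

theorem shiftMatrix_zero_mulVec_apply (y : Fin (n + 1) → R) (j : Fin n) :
    (shiftMatrix R n 0 *ᵥ y) j = y j.castSucc := by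
  simp [mulVec, dotProduct, shiftMatrix_zero_apply]

theorem shiftMatrix_one_mulVec_apply (y : Fin (n + 1) → R) (j : Fin n) :
    (shiftMatrix R n 1 *ᵥ y) j = y j.succ := by
  simp [mulVec, dotProduct, shiftMatrix_one_apply]

theorem vecMul_shiftMatrix_zero (x : Fin n → R) : x ᵥ* shiftMatrix R n 0 = Fin.snoc x 0 := by
  ext k
  refine Fin.lastCases ?_ (fun j => ?_) k <;>
    simp [vecMul, dotProduct, shiftMatrix_zero_apply, (Fin.castSucc_ne_last _).symm]

theorem vecMul_shiftMatrix_one (x : Fin n → R) :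
    x ᵥ* shiftMatrix R n 1 = Fin.cons (α := fun _ => R) 0 x := by
  ext k
  refine Fin.cases ?_ (fun j => ?_) k <;>
    simp [vecMul, dotProduct, shiftMatrix_one_apply, (Fin.succ_ne_zero _).symm]

theorem eq_zero_of_shiftMatrix_mulVec_eq_zero (hn : 1 ≤ n) {y : Fin (n + 1) → R}
    (h₀ : shiftMatrix R n 0 *ᵥ y = 0) (h₁ : shiftMatrix R n 1 *ᵥ y = 0) : y = 0 := by
  ext k
  refine Fin.cases ?_ (fun j => ?_) k
  · exact (shiftMatrix_zero_mulVec_apply y ⟨0, hn⟩).symm.trans (congrFun h₀ _)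
  · exact (shiftMatrix_one_mulVec_apply y j).symm.trans (congrFun h₁ j)

theorem vecMul_shiftMatrix_pencil_injective [IsDomain R] (n : ℕ) {a b : R}
    (hab : ¬(a = 0 ∧ b = 0)) :
    Function.Injective (a • shiftMatrix R n 0 + b • shiftMatrix R n 1).vecMul := by
  rw [← coe_vecMulLinear, injective_iff_map_eq_zero]
  intro x hx
  have hcoeff (k : Fin (n + 1)) :
      a * (Fin.snoc x 0 : Fin (n + 1) → R) k + b * (Fin.cons 0 x : Fin (n + 1) → R) k = 0 := by
    simpa [vecMul_add, vecMul_smul, vecMul_shiftMatrix_zero, vecMul_shiftMatrix_one]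
      using congrFun hx k
  by_cases ha : a = 0
  · have hb : b ≠ 0 := fun hb => hab ⟨ha, hb⟩
    ext j
    simpa [ha, hb] using hcoeff j.succ
  · suffices hcons : ∀ k, (Fin.cons 0 x : Fin (n + 1) → R) k = 0 from funext fun j => hcons j.succ
    intro k
    induction k using Fin.induction with
    | zero => rfl
    | succ j ih => simpa [ih, ha] using hcoeff j.castSucc

end Shift

section Canonical

variable {ι : Type*}

/-- Splits the index set of the canonical matrices into the indices `(i, p)` with `p < rᵢ` and
those with `p = rᵢ + k`, `0 ≤ k ≤ rᵢ`. -/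
def canonicalIndexEquiv (r : ι → ℕ) :
    ((i : ι) × Fin (2 * r i + 1)) ≃ ((i : ι) × Fin (r i)) ⊕ ((i : ι) × Fin (r i + 1)) :=
  (Equiv.sigmaCongrRight fun i => (finCongr (by omega)).trans finSumFinEquiv.symm).trans
    (Equiv.sigmaSumDistrib _ _)

theorem canonicalIndexEquiv_symm_inl (r : ι → ℕ) (i : ι) (j : Fin (r i)) :
    (canonicalIndexEquiv r).symm (Sum.inl ⟨i, j⟩) = ⟨i, ⟨j, by omega⟩⟩ := rfl

theorem canonicalIndexEquiv_symm_inr (r : ι → ℕ) (i : ι) (k : Fin (r i + 1)) :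
    (canonicalIndexEquiv r).symm (Sum.inr ⟨i, k⟩) = ⟨i, ⟨r i + k, by omega⟩⟩ := rfl

variable (R : Type*) [CommRing R] [DecidableEq ι]

/-- The canonical matrices of the family `r` over `R`: for `s = 0` and `s = 1` this is the
definition of `canA` and `canB`, with any field in place of `ℂ` and any index type in place of
`Fin h`. -/
def canonicalMatrix (r : ι → ℕ) (s : ℕ) :
    Matrix ((i : ι) × Fin (2 * r i + 1)) ((i : ι) × Fin (2 * r i + 1)) R :=
  of fun u v =>
    if u.1 = v.1 ∧
        (((v.2 : ℕ) = (u.2 : ℕ) + r u.1 + s ∧ (u.2 : ℕ) < r u.1) ∨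
         ((u.2 : ℕ) = (v.2 : ℕ) + r u.1 + s ∧ (v.2 : ℕ) < r u.1)) then 1 else 0

theorem blockDiagonal'_shiftMatrix_apply (r : ι → ℕ) (s : ℕ) (u : (i : ι) × Fin (r i))
    (v : (i : ι) × Fin (r i + 1)) :
    blockDiagonal' (fun i => shiftMatrix R (r i) s) u v =
      if u.1 = v.1 ∧ (v.2 : ℕ) = u.2 + s then 1 else 0 := by
  obtain ⟨i, j⟩ := u
  obtain ⟨i', k⟩ := v
  rcases eq_or_ne i i' with rfl | hi
  · simp [shiftMatrix, blockDiagonal'_apply_eq]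
  · simp [blockDiagonal'_apply_ne _ _ _ hi, hi]

theorem canonicalMatrix_submatrix_canonicalIndexEquiv_symm (r : ι → ℕ) (s : ℕ) :
    (canonicalMatrix R r s).submatrix (canonicalIndexEquiv r).symm (canonicalIndexEquiv r).symm =
      symmetrization (blockDiagonal' fun i => shiftMatrix R (r i) s) := by
  ext (⟨i, j⟩ | ⟨i, j⟩) (⟨i', j'⟩ | ⟨i', j'⟩)
  all_goals
    simp only [submatrix_apply, canonicalIndexEquiv_symm_inl, canonicalIndexEquiv_symm_inr,
      canonicalMatrix, of_apply, symmetrization, fromBlocks_apply₁₁, fromBlocks_apply₁₂,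
      fromBlocks_apply₂₁, fromBlocks_apply₂₂, transpose_apply, Matrix.zero_apply,
      blockDiagonal'_shiftMatrix_apply]
    rcases eq_or_ne i i' with rfl | hi
    · grind
    · simp only [hi, hi.symm, false_and, if_false]

theorem canonicalMatrix_eq_submatrix_symmetrization (r : ι → ℕ) (s : ℕ) :
    canonicalMatrix R r s =
      (symmetrization (blockDiagonal' fun i => shiftMatrix R (r i) s)).submatrix
        (canonicalIndexEquiv r) (canonicalIndexEquiv r) := by
  rw [← canonicalMatrix_submatrix_canonicalIndexEquiv_symm, submatrix_submatrix,
    Equiv.symm_comp_self, submatrix_id_id]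

theorem isSymm_canonicalMatrix (r : ι → ℕ) (s : ℕ) : (canonicalMatrix R r s).IsSymm := by
  rw [canonicalMatrix_eq_submatrix_symmetrization]
  exact (isSymm_symmetrization _).submatrix _

variable (K : Type*) [Field K] [Fintype ι]

theorem hasConstantRank_canonicalMatrix (r : ι → ℕ) :
    HasConstantRank (canonicalMatrix K r 0) (canonicalMatrix K r 1) (2 * ∑ i, r i) := by
  rw [canonicalMatrix_eq_submatrix_symmetrization, canonicalMatrix_eq_submatrix_symmetrization]
  refine (HasConstantRank.symmetrization fun a b hab => ?_).submatrix _ _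
  rw [← blockDiagonal'_smul, ← blockDiagonal'_smul, ← blockDiagonal'_add]
  refine (rank_eq_card_of_vecMul_injective (vecMul_blockDiagonal'_injective fun i => ?_)).trans ?_
  · exact vecMul_shiftMatrix_pencil_injective (r i) hab
  · simp only [Fintype.card_sigma, Fintype.card_fin]

theorem isNondegeneratePencil_canonicalMatrix {r : ι → ℕ} (hr : ∀ i, 1 ≤ r i) :
    IsNondegeneratePencil (canonicalMatrix K r 0) (canonicalMatrix K r 1) := by
  rw [canonicalMatrix_eq_submatrix_symmetrization, canonicalMatrix_eq_submatrix_symmetrization]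
  refine (isNondegeneratePencil_symmetrization ?_ ?_).submatrix _ _
  · intro y hA hB
    ext ⟨i, k⟩
    refine congrFun (eq_zero_of_shiftMatrix_mulVec_eq_zero (y := fun k => y ⟨i, k⟩) (hr i) ?_ ?_) k
    · ext j
      rw [← blockDiagonal'_mulVec_apply (fun i => shiftMatrix K (r i) 0), hA]
      rfl
    · ext j
      rw [← blockDiagonal'_mulVec_apply (fun i => shiftMatrix K (r i) 1), hB]
      rfl
  · intro x hA _
    refine vecMul_blockDiagonal'_injective (fun i => ?_) (hA.trans (zero_vecMul _).symm)
    simpa using vecMul_shiftMatrix_pencil_injective (R := K) (r i) (a := 1) (b := 0) (by simp)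

end Canonical

theorem exists_partition_card {h r : ℕ} (hh : 1 ≤ h) (hr : h ≤ r) :
    ∃ p : Fin h → ℕ, (∀ i, 1 ≤ p i) ∧ ∑ i, p i = r := by
  obtain ⟨k, rfl⟩ := Nat.exists_eq_add_of_le' hh
  refine ⟨Fin.cons (r - k) fun _ => 1, ?_, ?_⟩
  · exact Fin.cases (Nat.sub_pos_of_lt hr) fun _ => le_rfl
  · simp [Fin.sum_univ_succ, Nat.sub_add_cancel (Nat.le_of_succ_le hr)]

theorem exists_symm_nondegenerate_pencil_of_constant_rank (K : Type*) [Field K] {r N : ℕ}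
    (hN : 2 * r ≤ N) (hN' : N < 3 * r) :
    ∃ A B : Matrix (Fin (N + 1)) (Fin (N + 1)) K, A.IsSymm ∧ B.IsSymm ∧
      HasConstantRank A B (2 * r) ∧ IsNondegeneratePencil A B := by
  obtain ⟨h, hN_eq⟩ := Nat.exists_eq_add_of_le (hN.trans N.le_succ)
  obtain ⟨p, hp, rfl⟩ := exists_partition_card (h := h) (r := r) (by omega) (by omega)
  have hcard : Fintype.card ((i : Fin h) × Fin (2 * p i + 1)) = N + 1 := by
    simp only [Fintype.card_sigma, Fintype.card_fin, Finset.sum_add_distrib, ← Finset.mul_sum,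
      Finset.sum_const, Finset.card_univ, smul_eq_mul, mul_one]
    exact hN_eq.symm
  let e := (Fintype.equivFinOfCardEq hcard).symm
  exact ⟨(canonicalMatrix K p 0).submatrix e e, (canonicalMatrix K p 1).submatrix e e,
    (isSymm_canonicalMatrix K p 0).submatrix e, (isSymm_canonicalMatrix K p 1).submatrix e,
    (hasConstantRank_canonicalMatrix K p).submatrix e e,
    (isNondegeneratePencil_canonicalMatrix K hp).submatrix e e⟩

theorem canonical_pencil_constant_rank_nondegenerate_general
    (K : Type*) [Field K] {ι : Type*} [Fintype ι] [DecidableEq ι] (r : ι → ℕ)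
    (hr : ∀ i, 1 ≤ r i) :
    HasConstantRank (canonicalMatrix K r 0) (canonicalMatrix K r 1) (2 * ∑ i, r i) ∧
    IsNondegeneratePencil (canonicalMatrix K r 0) (canonicalMatrix K r 1) ∧
    ∀ s N : ℕ, 2 * s ≤ N → N < 3 * s →
      ∃ A B : Matrix (Fin (N + 1)) (Fin (N + 1)) K, A.IsSymm ∧ B.IsSymm ∧
        HasConstantRank A B (2 * s) ∧ IsNondegeneratePencil A B :=
  ⟨hasConstantRank_canonicalMatrix K r, isNondegeneratePencil_canonicalMatrix K hr,
    fun _ _ => exists_symm_nondegenerate_pencil_of_constant_rank K⟩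

/-- The canonical pencil of a partition `(r₁, …, r_h)` of `r` has
constant rank `2r` and is non-degenerate; in particular, for every `r ≥ 1` and every
`N` with `2r ≤ N ≤ 3r − 1` there is a non-degenerate pencil of complex symmetric
matrices of size `N + 1` and constant rank `2r`. -/
theorem canonical_pencil_constant_rank_nondegenerate
    (h : ℕ) (hh : 1 ≤ h) (rr : Fin h → ℕ) (hmono : Monotone rr) (hpos : ∀ i, 1 ≤ rr i)
    (r : ℕ) (hsum : ∑ i, rr i = r) :
    (∀ a b : ℂ, ¬(a = 0 ∧ b = 0) → (a • canA h rr + b • canB h rr).rank = 2 * r) ∧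
    (∀ v : PencilIdx h rr → ℂ,
      (canA h rr).mulVec v = 0 → (canB h rr).mulVec v = 0 → v = 0) ∧
    (LinearMap.range (canA h rr).mulVecLin ⊔ LinearMap.range (canB h rr).mulVecLin = ⊤) ∧
    (∀ r' N' : ℕ, 1 ≤ r' → 2 * r' ≤ N' → N' ≤ 3 * r' - 1 →
      ∃ A B : Matrix (Fin (N' + 1)) (Fin (N' + 1)) ℂ, A.IsSymm ∧ B.IsSymm ∧
        (∀ a b : ℂ, ¬(a = 0 ∧ b = 0) → (a • A + b • B).rank = 2 * r') ∧
        (∀ v : Fin (N' + 1) → ℂ, A.mulVec v = 0 → B.mulVec v = 0 → v = 0) ∧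
        LinearMap.range A.mulVecLin ⊔ LinearMap.range B.mulVecLin = ⊤) := by
  subst hsum
  obtain ⟨hrank, ⟨hker, hrange⟩, hexists⟩ :=
    canonical_pencil_constant_rank_nondegenerate_general ℂ rr hpos
  exact ⟨hrank, hker, hrange, fun r' N' hr' h₁ h₂ => hexists r' N' h₁ (by omega)⟩
end

section
/- Let r ≥ 1 and h ≥ 1 be integers, and let (r₁,…,r_h) and (s₁,…,s_h) be two non-decreasing sequences of positive integers each summing to r. Let (𝒜, ℬ) and (𝒜′, ℬ′) be the canonical matrices associated to (r₁,…,r_h) and (s₁,…,s_h) respectively (both of size N+1 = 2r+h). If there exists an invertible complex (N+1)×(N+1) matrix P such that the ℂ-linear span of {Pᵀ𝒜P, PᵀℬP} equals the ℂ-linear span of {𝒜′, ℬ′}, then rᵢ = sᵢ for every i = 1,…,h. -/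
open Matrix

/-!
The invariant behind the theorem is the position of the kernels `ker (𝒜 - t ℬ)` relative to each
other. In the `i`-th block such a kernel is the line spanned by `(0, …, 0, t ^ rᵢ, …, t, 1)`, a
point of a rational normal curve of degree `rᵢ`. Any `rᵢ + 1` points of that curve are linearly
independent and span all others, so for a finite set `T` and `t ∉ T` the `i`-th block of
`ker (𝒜 - t ℬ)` lies in `∑ s ∈ T, ker (𝒜 - s ℬ)` if `rᵢ < #T` and meets it trivially otherwise.
Hence the intersection of the two spaces has dimension `#{i | rᵢ < #T}`.

A congruence of pencils carries the kernels of one to those of the other, up to a Möbius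
transformation of the parameter `t`, so these dimensions agree, and they determine the parts.
-/

section MulVec

variable {ι κ R : Type*} [Fintype κ] [NonAssocSemiring R] {M : Matrix ι κ R} {u : ι} {w : κ → R}

lemma mulVec_apply_eq_of_row_eq_ite [DecidableEq κ] {v : κ}
    (hM : ∀ k, M u k = if k = v then 1 else 0) : (M *ᵥ w) u = w v := by
  simp [mulVec, dotProduct, hM]

lemma mulVec_apply_eq_zero_of_row_eq_zero (hM : ∀ k, M u k = 0) : (M *ᵥ w) u = 0 := by
  simp [mulVec, dotProduct, hM]

end MulVec

section PencilKernel

variable {R m n m' n' : Type*} [CommRing R] [Fintype n] [Fintype n']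

/-- The kernel of the member `A - t B` of the matrix pencil spanned by `A` and `B`. -/
def pencilKernel (A B : Matrix m n R) (t : R) : Submodule R (n → R) :=
  LinearMap.ker (A - t • B).mulVecLin

lemma mem_pencilKernel {A B : Matrix m n R} {t : R} {w : n → R} :
    w ∈ pencilKernel A B t ↔ A *ᵥ w = t • (B *ᵥ w) := by
  rw [pencilKernel, LinearMap.mem_ker, mulVecLin_apply, sub_mulVec, smul_mulVec, sub_eq_zero]

lemma ker_mulVecLin_mul_mul [Fintype m] [DecidableEq m] [Fintype m'] {L : Matrix m m' R}
    {U : Matrix m' m R} (hLU : L * U = 1) (M : Matrix m n R) (V : Matrix n n' R) :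
    LinearMap.ker (U * M * V).mulVecLin = (LinearMap.ker M.mulVecLin).comap V.mulVecLin := by
  have hU : LinearMap.ker U.mulVecLin = ⊥ := by
    refine LinearMap.ker_eq_bot_of_inverse (g := L.mulVecLin) ?_
    rw [← mulVecLin_mul, hLU, mulVecLin_one]
  rw [Matrix.mul_assoc, mulVecLin_mul, LinearMap.ker_comp_of_ker_eq_bot _ hU, mulVecLin_mul,
    LinearMap.ker_comp]

lemma finrank_iSup_inf_pencilKernel_image [DecidableEq R]
    {A B : Matrix m n R} {A' B' : Matrix m' n' R}
    (e : (n' → R) ≃ₗ[R] (n → R)) {u : R → R} {T : Finset R} {t : R}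
    (hT : ∀ s ∈ T, (pencilKernel A' B' s).map (e : (n' → R) →ₗ[R] (n → R)) = pencilKernel A B (u s))
    (ht : (pencilKernel A' B' t).map (e : (n' → R) →ₗ[R] (n → R)) = pencilKernel A B (u t)) :
    Module.finrank R ↥((⨆ s ∈ T.image u, pencilKernel A B s) ⊓ pencilKernel A B (u t)) =
      Module.finrank R ↥((⨆ s ∈ T, pencilKernel A' B' s) ⊓ pencilKernel A' B' t) := by
  have hsup : (⨆ s ∈ T, pencilKernel A' B' s).map (e : (n' → R) →ₗ[R] (n → R)) =
      ⨆ s ∈ T.image u, pencilKernel A B s := by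
    simp_rw [Finset.iSup_finset_image, Submodule.map_iSup]
    exact iSup_congr fun s => iSup_congr (hT s)
  rw [← hsup, ← ht, ← Submodule.map_inf _ e.injective, LinearEquiv.finrank_map_eq]

lemma map_pencilKernel {K : Type*} [Field K] [Fintype m] [DecidableEq m] [Fintype m']
    [DecidableEq n] [DecidableEq n']
    {A B : Matrix m n K} {A' B' : Matrix m' n' K} {L : Matrix m m' K} {U : Matrix m' m K}
    {V : Matrix n n' K} {W : Matrix n' n K} {a b c d t : K}
    (hLU : L * U = 1) (hVW : V * W = 1) (hWV : W * V = 1)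
    (hA : a • (U * A * V) + b • (U * B * V) = A') (hB : c • (U * A * V) + d • (U * B * V) = B')
    (ht : a - t * c ≠ 0) :
    (pencilKernel A' B' t).map (toLin'OfInv hWV hVW : (n' → K) →ₗ[K] (n → K)) =
      pencilKernel A B ((t * d - b) / (a - t * c)) := by
  set s := (t * d - b) / (a - t * c)
  have hmember : A' - t • B' = (a - t * c) • (U * (A - s • B) * V) := by
    have hmul : (a - t * c) * s = t * d - b := mul_div_cancel₀ _ ht
    rw [Matrix.mul_sub, Matrix.sub_mul, smul_sub, Matrix.mul_smul, Matrix.smul_mul, smul_smul, hmul,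
      ← hA, ← hB]
    module
  have hcomap : pencilKernel A' B' t = (pencilKernel A B s).comap V.mulVecLin := by
    rw [pencilKernel, hmember, ← toLin'_apply', map_smul, LinearMap.ker_smul _ _ ht, toLin'_apply',
      ker_mulVecLin_mul_mul hLU, pencilKernel]
  rw [hcomap]
  exact Submodule.map_comap_eq_of_surjective (toLin'OfInv hWV hVW).surjective _

end PencilKernel

section Parameters

variable {R K : Type*} [CommRing R] [IsDomain R] [Field K]

lemma exists_combination_of_span_pair_eq {E : Type*} [AddCommGroup E] [Module R E]
    {x y x' y' : E} (hli : LinearIndependent R ![x', y'])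
    (hspan : Submodule.span R {x, y} = Submodule.span R {x', y'}) :
    ∃ a b c d : R, a * d ≠ b * c ∧ a • x + b • y = x' ∧ c • x + d • y = y' := by
  obtain ⟨a, b, hx⟩ : ∃ a b : R, a • x + b • y = x' :=
    Submodule.mem_span_pair.1 (hspan ▸ Submodule.subset_span (by simp))
  obtain ⟨c, d, hy⟩ : ∃ c d : R, c • x + d • y = y' :=
    Submodule.mem_span_pair.1 (hspan ▸ Submodule.subset_span (by simp))
  rw [← hx, ← hy, LinearIndependent.pair_add_smul_add_smul_iff] at hli
  exact ⟨a, b, c, d, hli.2, hx, hy⟩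

lemma infinite_setOf_sub_mul_ne_zero [Infinite R] {a b c d : R} (hdet : a * d ≠ b * c) :
    {t : R | a - t * c ≠ 0}.Infinite := by
  refine Set.infinite_of_finite_compl (Set.Subsingleton.finite fun t ht t' ht' => ?_)
  simp only [Set.mem_compl_iff, Set.mem_ofPred_eq, not_not] at ht ht'
  have hc : c ≠ 0 := by
    rintro rfl
    simp_all
  exact mul_right_cancel₀ hc (by linear_combination ht' - ht)

lemma injOn_mobius {a b c d : K} (hdet : a * d ≠ b * c) :
    Set.InjOn (fun t => (t * d - b) / (a - t * c)) {t : K | a - t * c ≠ 0} := by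
  intro t ht t' ht' h
  have hcross : (t * d - b) * (a - t' * c) = (t' * d - b) * (a - t * c) :=
    (div_eq_div_iff ht ht').1 h
  exact mul_left_cancel₀ (sub_ne_zero.2 hdet) (by linear_combination hcross)

end Parameters

open Polynomial in
lemma pow_eq_sum_lagrange_basis {K : Type*} [Field K] [DecidableEq K] {T : Finset K} {m : ℕ}
    (hm : m < T.card) (t : K) : t ^ m = ∑ s ∈ T, (Lagrange.basis T id s).eval t * s ^ m := by
  have hdeg : (X ^ m : K[X]).degree < T.card := by
    rw [degree_X_pow]
    exact_mod_cast hm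
  have hX := congrArg (eval t) (Lagrange.eq_interpolate (v := id) (Set.injOn_id _) hdeg)
  simpa [Lagrange.interpolate_apply, eval_finsetSum, mul_comm] using hX

section Counting

variable {ι κ : Type*} [Fintype ι] [Fintype κ] {f : ι → ℕ} {g : κ → ℕ}

lemma card_lt_add_one (f : ι → ℕ) (k : ℕ) : Fintype.card {i // f i < k + 1} =
    Fintype.card {i // f i < k} + Fintype.card {i // f i = k} := by
  have hdisj : Disjoint (fun i => f i < k) fun i => f i = k :=
    Pi.disjoint_iff.2 fun i => by simpa [Prop.disjoint_iff] using fun h => h.ne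
  simp_rw [Nat.lt_succ_iff_lt_or_eq]
  exact Fintype.card_subtype_or_disjoint _ _ hdisj

lemma exists_equiv_eq_comp_of_card_lt
    (hcard : ∀ k, Fintype.card {i // f i < k} = Fintype.card {j // g j < k}) :
    ∃ σ : ι ≃ κ, f = g ∘ σ := by
  have hfiber (k : ℕ) : Fintype.card {i // f i = k} = Fintype.card {j // g j = k} := by
    have hsucc := hcard (k + 1)
    rwa [card_lt_add_one, card_lt_add_one, hcard k, Nat.add_left_cancel_iff] at hsucc
  let σ : ι ≃ κ := Equiv.ofFiberEquiv fun k => Fintype.equivOfCardEq (hfiber k)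
  exact ⟨σ, funext fun i => (Equiv.ofFiberEquiv_map _ i).symm⟩

end Counting

section CanonicalPencil

open Polynomial

variable {h : ℕ} {rr : Fin h → ℕ}

/-- The kernel of the member `𝒜 - t ℬ` of the canonical pencil `L_{(r₁,…,r_h)}`. -/
abbrev canKer (rr : Fin h → ℕ) (t : ℂ) : Submodule ℂ (PencilIdx h rr → ℂ) :=
  pencilKernel (canA h rr) (canB h rr) t

/-- The first `rᵢ` positions `(i, p)` of block `i`, in decreasing order of `p`. -/
def headIdx (i : Fin h) (m : Fin (rr i)) : PencilIdx h rr := ⟨i, rr i - 1 - m, by omega⟩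

/-- The last `rᵢ + 1` positions `(i, p)` of block `i`, in decreasing order of `p`, so that kernel
vectors have entries `1, t, …, t ^ rᵢ` there, up to a common factor. -/
def tailIdx (i : Fin h) (m : Fin (rr i + 1)) : PencilIdx h rr := ⟨i, 2 * rr i - m, by omega⟩

lemma PencilIdx.eq_iff {u v : PencilIdx h rr} : u = v ↔ u.1 = v.1 ∧ (u.2 : ℕ) = v.2 := by
  refine ⟨by rintro rfl; exact ⟨rfl, rfl⟩, fun ⟨hblock, hpos⟩ => ?_⟩
  obtain ⟨i, p⟩ := u
  obtain ⟨j, q⟩ := v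
  obtain rfl : i = j := hblock
  exact congrArg _ (Fin.ext hpos)

lemma PencilIdx.forall_iff {p : PencilIdx h rr → Prop} :
    (∀ u, p u) ↔ ∀ i, (∀ m, p (headIdx i m)) ∧ ∀ m, p (tailIdx i m) := by
  refine ⟨fun hp i => ⟨fun _ => hp _, fun _ => hp _⟩, fun hp ⟨i, q, hq⟩ => ?_⟩
  rcases lt_or_ge q (rr i) with hlt | hge
  · have hidx : (⟨i, q, hq⟩ : PencilIdx h rr) = headIdx i ⟨rr i - 1 - q, by omega⟩ :=
      PencilIdx.eq_iff.2 ⟨rfl, by simp only [headIdx]; omega⟩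
    exact hidx ▸ (hp i).1 _
  · have hidx : (⟨i, q, hq⟩ : PencilIdx h rr) = tailIdx i ⟨2 * rr i - q, by omega⟩ :=
      PencilIdx.eq_iff.2 ⟨rfl, by simp only [tailIdx]; omega⟩
    exact hidx ▸ (hp i).2 _

variable (w : PencilIdx h rr → ℂ) (i : Fin h)

lemma canA_mulVec_headIdx (m : Fin (rr i)) :
    (canA h rr *ᵥ w) (headIdx i m) = w (tailIdx i m.succ) := by
  refine mulVec_apply_eq_of_row_eq_ite (fun v => if_congr ?_ rfl rfl)
  rw [PencilIdx.eq_iff]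
  refine and_congr eq_comm ?_
  simp only [headIdx, tailIdx, Fin.val_succ]
  omega

lemma canA_mulVec_tailIdx_succ (m : Fin (rr i)) :
    (canA h rr *ᵥ w) (tailIdx i m.succ) = w (headIdx i m) := by
  refine mulVec_apply_eq_of_row_eq_ite (fun v => if_congr ?_ rfl rfl)
  rw [PencilIdx.eq_iff]
  refine and_congr eq_comm ?_
  simp only [headIdx, tailIdx, Fin.val_succ]
  omega

lemma canA_mulVec_tailIdx_zero : (canA h rr *ᵥ w) (tailIdx i 0) = 0 := by
  refine mulVec_apply_eq_zero_of_row_eq_zero (fun v => if_neg ?_)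
  rintro ⟨hblock, hpos⟩
  obtain rfl : i = v.1 := hblock
  simp only [tailIdx, Fin.val_zero] at hpos
  omega

lemma canB_mulVec_headIdx (m : Fin (rr i)) :
    (canB h rr *ᵥ w) (headIdx i m) = w (tailIdx i m.castSucc) := by
  refine mulVec_apply_eq_of_row_eq_ite (fun v => if_congr ?_ rfl rfl)
  rw [PencilIdx.eq_iff]
  refine and_congr eq_comm ?_
  simp only [headIdx, tailIdx, Fin.val_castSucc]
  omega

lemma canB_mulVec_tailIdx_castSucc (m : Fin (rr i)) :
    (canB h rr *ᵥ w) (tailIdx i m.castSucc) = w (headIdx i m) := by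
  refine mulVec_apply_eq_of_row_eq_ite (fun v => if_congr ?_ rfl rfl)
  rw [PencilIdx.eq_iff]
  refine and_congr eq_comm ?_
  simp only [headIdx, tailIdx, Fin.val_castSucc]
  omega

lemma canB_mulVec_tailIdx_last : (canB h rr *ᵥ w) (tailIdx i (Fin.last (rr i))) = 0 := by
  refine mulVec_apply_eq_zero_of_row_eq_zero (fun v => if_neg ?_)
  rintro ⟨-, hpos⟩
  simp only [tailIdx, Fin.val_last] at hpos
  omega

variable {w i} {t : ℂ}

lemma canA_mulVec_tailIdx_eq_zero (hw : w ∈ canKer rr t) (q : Fin (rr i + 1)) :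
    (canA h rr *ᵥ w) (tailIdx i q) = 0 := by
  have hrow (u) : (canA h rr *ᵥ w) u = t * (canB h rr *ᵥ w) u := congrFun (mem_pencilKernel.1 hw) u
  induction q using Fin.reverseInduction with
  | last => rw [hrow, canB_mulVec_tailIdx_last, mul_zero]
  | cast m ih => rw [hrow, canB_mulVec_tailIdx_castSucc, ← canA_mulVec_tailIdx_succ w, ih, mul_zero]

lemma apply_headIdx_of_mem_canKer (hw : w ∈ canKer rr t) (m : Fin (rr i)) :
    w (headIdx i m) = 0 := by
  rw [← canA_mulVec_tailIdx_succ w, canA_mulVec_tailIdx_eq_zero hw]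

lemma apply_tailIdx_of_mem_canKer (hw : w ∈ canKer rr t) (q : Fin (rr i + 1)) :
    w (tailIdx i q) = t ^ (q : ℕ) * w (tailIdx i 0) := by
  induction q using Fin.induction with
  | zero => simp
  | succ m ih =>
    have hrow : (canA h rr *ᵥ w) (headIdx i m) = t * (canB h rr *ᵥ w) (headIdx i m) :=
      congrFun (mem_pencilKernel.1 hw) _
    rw [← canA_mulVec_headIdx w, hrow, canB_mulVec_headIdx, ih, Fin.val_succ, Fin.val_castSucc,
      pow_succ', mul_assoc]

/-- The parametrisation of `ker (𝒜 - t ℬ)` by the last entry `c i` of each block. -/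
def kernelVec (rr : Fin h → ℕ) (t : ℂ) : (Fin h → ℂ) →ₗ[ℂ] (PencilIdx h rr → ℂ) :=
  LinearMap.pi fun u =>
    if (u.2 : ℕ) < rr u.1 then 0 else t ^ (2 * rr u.1 - u.2) • LinearMap.proj u.1

lemma kernelVec_headIdx (t : ℂ) (c : Fin h → ℂ) (m : Fin (rr i)) :
    kernelVec rr t c (headIdx i m) = 0 := by
  have hlt : rr i - 1 - m < rr i := by omega
  simp [kernelVec, headIdx, hlt]

lemma kernelVec_tailIdx (t : ℂ) (c : Fin h → ℂ) (q : Fin (rr i + 1)) :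
    kernelVec rr t c (tailIdx i q) = t ^ (q : ℕ) * c i := by
  have hge : ¬ 2 * rr i - q < rr i := by omega
  have hexp : 2 * rr i - (2 * rr i - q) = (q : ℕ) := by omega
  simp [kernelVec, tailIdx, hge, hexp]

lemma kernelVec_mem_canKer (t : ℂ) (c : Fin h → ℂ) : kernelVec rr t c ∈ canKer rr t := by
  refine mem_pencilKernel.2 (funext (PencilIdx.forall_iff.2 fun i => ⟨fun m => ?_, fun q => ?_⟩))
  · rw [Pi.smul_apply, canA_mulVec_headIdx, canB_mulVec_headIdx, kernelVec_tailIdx,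
      kernelVec_tailIdx, Fin.val_succ, Fin.val_castSucc, pow_succ', smul_eq_mul, mul_assoc]
  · have hA : (canA h rr *ᵥ kernelVec rr t c) (tailIdx i q) = 0 := by
      cases q using Fin.cases with
      | zero => exact canA_mulVec_tailIdx_zero _ i
      | succ m => rw [canA_mulVec_tailIdx_succ, kernelVec_headIdx]
    have hB : (canB h rr *ᵥ kernelVec rr t c) (tailIdx i q) = 0 := by
      cases q using Fin.lastCases with
      | last => exact canB_mulVec_tailIdx_last _ i
      | cast m => rw [canB_mulVec_tailIdx_castSucc, kernelVec_headIdx]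
    rw [Pi.smul_apply, hA, hB, smul_zero]

lemma eq_kernelVec_of_mem_canKer (hw : w ∈ canKer rr t) :
    w = kernelVec rr t fun i => w (tailIdx i 0) := by
  refine funext (PencilIdx.forall_iff.2 fun i => ⟨fun m => ?_, fun q => ?_⟩)
  · rw [apply_headIdx_of_mem_canKer hw, kernelVec_headIdx]
  · rw [apply_tailIdx_of_mem_canKer hw, kernelVec_tailIdx]

lemma kernelVec_injective (rr : Fin h → ℕ) (t : ℂ) : Function.Injective (kernelVec rr t) := by
  intro c c' hc
  funext i
  simpa [kernelVec_tailIdx] using congrFun hc (tailIdx i 0)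

/-- The linear form with the coefficients of `p` on the tail of block `i`: on `ker (𝒜 - t ℬ)` it
evaluates `p` at `t`, provided that `p` has degree at most `rᵢ`. -/
noncomputable def tailEval (i : Fin h) (p : ℂ[X]) : (PencilIdx h rr → ℂ) →ₗ[ℂ] ℂ :=
  ∑ q : Fin (rr i + 1), p.coeff q • LinearMap.proj (tailIdx i q)

lemma tailEval_apply_of_mem_canKer (hw : w ∈ canKer rr t) {p : ℂ[X]}
    (hp : p.natDegree ≤ rr i) : tailEval i p w = p.eval t * w (tailIdx i 0) := by
  rw [eval_eq_sum_range' (Nat.lt_succ_of_le hp), Finset.sum_range, Finset.sum_mul]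
  simp only [tailEval, LinearMap.sum_apply, LinearMap.smul_apply, LinearMap.proj_apply, smul_eq_mul]
  exact Finset.sum_congr rfl fun q _ => by rw [apply_tailIdx_of_mem_canKer hw, mul_assoc]

lemma apply_tailIdx_zero_of_mem_iSup_canKer {T : Finset ℂ} (ht : t ∉ T) (hw : w ∈ canKer rr t)
    (hwT : w ∈ ⨆ s ∈ T, canKer rr s) (hi : T.card ≤ rr i) : w (tailIdx i 0) = 0 := by
  let p : ℂ[X] := ∏ s ∈ T, (X - C s)
  have hdeg : p.natDegree ≤ rr i := by
    rwa [natDegree_finsetProd_X_sub_C_eq_card]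
  have hroot (s : ℂ) : p.eval s = 0 ↔ s ∈ T := by
    simp [p, eval_prod, Finset.prod_eq_zero_iff, sub_eq_zero]
  have hT : ⨆ s ∈ T, canKer rr s ≤ LinearMap.ker (tailEval i p) := by
    refine iSup₂_le fun s hs v hv => ?_
    rw [LinearMap.mem_ker, tailEval_apply_of_mem_canKer hv hdeg, (hroot s).2 hs, zero_mul]
  have hmul : p.eval t * w (tailIdx i 0) = 0 := by
    rw [← tailEval_apply_of_mem_canKer hw hdeg, LinearMap.mem_ker.1 (hT hwT)]
  exact (mul_eq_zero.1 hmul).resolve_left ((hroot t).not.2 ht)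

lemma kernelVec_mem_iSup_canKer {T : Finset ℂ} (t : ℂ) {c : Fin h → ℂ}
    (hc : ∀ i, T.card ≤ rr i → c i = 0) :
    kernelVec rr t c ∈ ⨆ s ∈ T, canKer rr s := by
  have hsum : kernelVec rr t c =
      ∑ s ∈ T, (Lagrange.basis T id s).eval t • kernelVec rr s c := by
    refine funext (PencilIdx.forall_iff.2 fun i => ⟨fun m => ?_, fun q => ?_⟩)
    · simp [kernelVec_headIdx]
    · rcases le_or_gt T.card (rr i) with hi | hi
      · simp [kernelVec_tailIdx, hc i hi]
      · rw [kernelVec_tailIdx, pow_eq_sum_lagrange_basis (q.is_le.trans_lt hi), Finset.sum_mul]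
        simp [kernelVec_tailIdx, mul_assoc]
  rw [hsum]
  exact Submodule.sum_mem _ fun s hs => Submodule.smul_mem _ _ <|
    Submodule.mem_iSup_of_mem s <| Submodule.mem_iSup_of_mem hs <| kernelVec_mem_canKer s c

theorem iSup_canKer_inf_canKer {T : Finset ℂ} (ht : t ∉ T) :
    (⨆ s ∈ T, canKer rr s) ⊓ canKer rr t =
      (⨅ i ∈ {i | T.card ≤ rr i}, LinearMap.ker (LinearMap.proj i)).map (kernelVec rr t) := by
  ext w
  simp only [Submodule.mem_inf, Submodule.mem_map, Submodule.mem_iInf, Set.mem_ofPred_eq,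
    LinearMap.mem_ker, LinearMap.proj_apply]
  constructor
  · rintro ⟨hwT, hw⟩
    exact ⟨_, fun i => apply_tailIdx_zero_of_mem_iSup_canKer ht hw hwT,
      (eq_kernelVec_of_mem_canKer hw).symm⟩
  · rintro ⟨c, hc, rfl⟩
    exact ⟨kernelVec_mem_iSup_canKer t hc, kernelVec_mem_canKer t c⟩

theorem finrank_iSup_canKer_inf_canKer {T : Finset ℂ} (ht : t ∉ T) :
    Module.finrank ℂ ↥((⨆ s ∈ T, canKer rr s) ⊓ canKer rr t) =
      Fintype.card {i // rr i < T.card} := by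
  have hdisj : Disjoint {i | rr i < T.card} {i | T.card ≤ rr i} :=
    Set.disjoint_left.2 fun _ hlt => by simpa using hlt
  have hcover : Set.univ ⊆ {i | rr i < T.card} ∪ {i | T.card ≤ rr i} :=
    fun i _ => lt_or_ge (rr i) T.card
  rw [iSup_canKer_inf_canKer ht,
    ← (Submodule.equivMapOfInjective _ (kernelVec_injective rr t) _).finrank_eq,
    (LinearMap.iInfKerProjEquiv ℂ (fun _ => ℂ) hdisj hcover).finrank_eq,
    Module.finrank_fintype_fun_eq_card]
  rfl

lemma linearIndependent_canA_canB_or_eq_zero (rr : Fin h → ℕ) :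
    LinearIndependent ℂ ![canA h rr, canB h rr] ∨ canA h rr = 0 ∧ canB h rr = 0 := by
  by_cases hr : ∃ i, 0 < rr i
  · left
    obtain ⟨i, hi⟩ := hr
    refine LinearIndependent.pair_iff.2 fun a b hab => ?_
    have hrow (v : PencilIdx h rr) := congrFun (congrFun hab ⟨i, 0, by omega⟩) v
    exact ⟨by simpa [canA, canB, hi, hi.ne'] using hrow ⟨i, rr i, by omega⟩,
      by simpa [canA, canB, hi, hi.ne'] using hrow ⟨i, rr i + 1, by omega⟩⟩
  · right
    push Not at hr
    constructor <;> ext u v <;> simp [canA, canB, Nat.le_zero.1 (hr _)]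

end CanonicalPencil

section Congruence

variable {h h' : ℕ} {rr : Fin h → ℕ} {ss : Fin h' → ℕ}
  {P : Matrix (PencilIdx h rr) (PencilIdx h' ss) ℂ}
  {Q : Matrix (PencilIdx h' ss) (PencilIdx h rr) ℂ}

lemma exists_canA_canB_combination
    (hspan : Submodule.span ℂ {Pᵀ * canA h rr * P, Pᵀ * canB h rr * P} =
      Submodule.span ℂ {canA h' ss, canB h' ss}) :
    ∃ a b c d : ℂ, a * d ≠ b * c ∧
      a • (Pᵀ * canA h rr * P) + b • (Pᵀ * canB h rr * P) = canA h' ss ∧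
      c • (Pᵀ * canA h rr * P) + d • (Pᵀ * canB h rr * P) = canB h' ss := by
  rcases linearIndependent_canA_canB_or_eq_zero ss with hli | ⟨hA, hB⟩
  · exact exists_combination_of_span_pair_eq hli hspan
  · rw [hA, hB] at hspan ⊢
    obtain ⟨hPA, hPB⟩ : Pᵀ * canA h rr * P = 0 ∧ Pᵀ * canB h rr * P = 0 := by
      simpa [Submodule.span_eq_bot] using hspan
    exact ⟨1, 0, 0, 1, by simp, by simp [hPA], by simp [hPB]⟩

lemma card_lt_eq_card_lt {S : Set ℂ} {u : ℂ → ℂ} (hS : S.Infinite) (hu : S.InjOn u)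
    (e : (PencilIdx h' ss → ℂ) ≃ₗ[ℂ] (PencilIdx h rr → ℂ))
    (he : ∀ t ∈ S, (canKer ss t).map (e : _ →ₗ[ℂ] _) = canKer rr (u t)) (k : ℕ) :
    Fintype.card {i // rr i < k} = Fintype.card {j // ss j < k} := by
  obtain ⟨T, hTS, rfl⟩ := hS.exists_subset_card_eq k
  obtain ⟨t, htS, htT⟩ := (hS.sdiff T.finite_toSet).nonempty
  have hcard : (T.image u).card = T.card := Finset.card_image_of_injOn (hu.mono hTS)
  have hut : u t ∉ T.image u := by
    rw [← Finset.mem_coe, Finset.coe_image, hu.mem_image_iff hTS htS]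
    exact htT
  have hrank := finrank_iSup_inf_pencilKernel_image e (fun s hs => he s (hTS hs)) (he t htS)
  rwa [finrank_iSup_canKer_inf_canKer hut, hcard, finrank_iSup_canKer_inf_canKer htT] at hrank

theorem canonical_pencils_congruent_iff_same_partition_general (hPQ : P * Q = 1) (hQP : Q * P = 1)
    (hspan : Submodule.span ℂ {Pᵀ * canA h rr * P, Pᵀ * canB h rr * P} =
      Submodule.span ℂ {canA h' ss, canB h' ss}) :
    ∃ σ : Fin h ≃ Fin h', rr = ss ∘ σ := by
  obtain ⟨a, b, c, d, hdet, hA, hB⟩ := exists_canA_canB_combination hspan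
  have hQP_transpose : Qᵀ * Pᵀ = 1 := by rw [← transpose_mul, hPQ, transpose_one]
  exact exists_equiv_eq_comp_of_card_lt <|
    card_lt_eq_card_lt (infinite_setOf_sub_mul_ne_zero hdet) (injOn_mobius hdet)
      (toLin'OfInv hQP hPQ) fun _ ht => map_pencilKernel hQP_transpose hPQ hQP hA hB ht

end Congruence

/-- Two canonical pencils with the same number of parts `h` and the
same total `r` are congruent only if the partitions coincide. -/
theorem canonical_pencils_congruent_iff_same_partition
    (r h : ℕ) (hr : 1 ≤ r) (hh : 1 ≤ h)
    (rr ss : Fin h → ℕ) (hrmono : Monotone rr) (hsmono : Monotone ss)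
    (hrpos : ∀ i, 1 ≤ rr i) (hspos : ∀ i, 1 ≤ ss i)
    (hrsum : ∑ i, rr i = r) (hssum : ∑ i, ss i = r)
    (P : Matrix (PencilIdx h rr) (PencilIdx h ss) ℂ)
    (Q : Matrix (PencilIdx h ss) (PencilIdx h rr) ℂ)
    (hPQ : P * Q = 1) (hQP : Q * P = 1)
    (hspan : Submodule.span ℂ {Pᵀ * canA h rr * P, Pᵀ * canB h rr * P} =
      Submodule.span ℂ {canA h ss, canB h ss}) :
    rr = ss := by
  obtain ⟨σ, rfl⟩ := canonical_pencils_congruent_iff_same_partition_general hPQ hQP hspan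
  exact Tuple.unique_monotone (σ := σ) (τ := Equiv.refl _) hrmono hsmono
end

section
/- Let r ≥ 1 be an integer and let 𝒜, ℬ be the corank-one canonical matrices of size 2r+1. For every (a,b) ∈ ℂ² with (a,b) ≠ (0,0), the kernel of a•𝒜 + b•ℬ is exactly the one-dimensional ℂ-linear span of the nonzero vector w(a,b) ∈ ℂ^{2r+1} defined by w(a,b)_j = 0 for 0 ≤ j ≤ r−1 and w(a,b)_{r+i} = (−a)^i · b^{r−i} for 0 ≤ i ≤ r. In particular rank(a•𝒜 + b•ℬ) = 2r for all (a,b) ≠ (0,0). -/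
open Matrix

/-- The first corank-one canonical matrix `𝒜` of size `2r + 1`:
`𝒜_{p, r+p} = 𝒜_{r+p, p} = 1` for `0 ≤ p ≤ r − 1`, all other entries `0`. -/
def corankOneA (r : ℕ) : Matrix (Fin (2 * r + 1)) (Fin (2 * r + 1)) ℂ :=
  Matrix.of fun p q =>
    if ((q : ℕ) = (p : ℕ) + r ∧ (p : ℕ) < r) ∨ ((p : ℕ) = (q : ℕ) + r ∧ (q : ℕ) < r)
    then 1 else 0

/-- The second corank-one canonical matrix `ℬ` of size `2r + 1`:
`ℬ_{p, r+p+1} = ℬ_{r+p+1, p} = 1` for `0 ≤ p ≤ r − 1`, all other entries `0`. -/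
def corankOneB (r : ℕ) : Matrix (Fin (2 * r + 1)) (Fin (2 * r + 1)) ℂ :=
  Matrix.of fun p q =>
    if ((q : ℕ) = (p : ℕ) + r + 1 ∧ (p : ℕ) < r) ∨ ((p : ℕ) = (q : ℕ) + r + 1 ∧ (q : ℕ) < r)
    then 1 else 0

/-- The kernel generator `w(a,b)` of `a𝒜 + bℬ`: `w_j = 0` for `j < r` and
`w_{r+i} = (−a)^i b^{r−i}` for `0 ≤ i ≤ r`. -/
def kerGen (r : ℕ) (a b : ℂ) : Fin (2 * r + 1) → ℂ := fun j =>
  if (j : ℕ) < r then 0 else (-a) ^ ((j : ℕ) - r) * b ^ (2 * r - (j : ℕ))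

/-!
Splitting the indices into the first `r` and the last `r + 1` puts `a𝒜 + bℬ` into the block form
`[0, L; Lᵀ, 0]`, where `L` is the Kronecker block at `(a, b)`. On coefficient vectors, `u ↦ u L` is
multiplication by the polynomial `a + b X`, hence injective when `(a, b) ≠ (0, 0)`. Therefore `Lᵀ`
has trivial kernel and `L` has rank `r`, so the kernel of `L` is a line, and it contains the vector
with entries `(-a) ^ i * b ^ (r - i)`.
-/

open Polynomial

section KroneckerBlock

variable {R : Type*} (r : ℕ)

/-- The singular Kronecker block of size `r × (r + 1)` evaluated at `(a, b)`: row `i` has `a` in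
column `i` and `b` in column `i + 1`. It is the off-diagonal block of `a𝒜 + bℬ`. -/
def kroneckerBlock [AddMonoid R] (a b : R) : Matrix (Fin r) (Fin (r + 1)) R :=
  Matrix.of fun i => Pi.single i.castSucc a + Pi.single i.succ b

/-- The affine representative `(t ^ r, s t ^ (r - 1), …, s ^ r)` of the point with parameter
`[s : t]` on the rational normal curve of degree `r`. With `s = -a` and `t = b` it is the kernel
vector of the Kronecker block at `(a, b)`. -/
def rationalNormalCurve [Monoid R] (s t : R) : Fin (r + 1) → R :=
  fun i => s ^ (i : ℕ) * t ^ (r - i)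

theorem rationalNormalCurve_ne_zero [MonoidWithZero R] [NoZeroDivisors R] [Nontrivial R] {s t : R}
    (hst : ¬(s = 0 ∧ t = 0)) : rationalNormalCurve r s t ≠ 0 := by
  intro h
  have hs : s ^ r = 0 := by simpa [rationalNormalCurve] using congrFun h (Fin.last r)
  have ht : t ^ r = 0 := by simpa [rationalNormalCurve] using congrFun h 0
  exact hst ⟨eq_zero_of_pow_eq_zero hs, eq_zero_of_pow_eq_zero ht⟩

theorem kroneckerBlock_row [AddMonoid R] (a b : R) (i : Fin r) :
    kroneckerBlock r a b i = Pi.single i.castSucc a + Pi.single i.succ b :=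
  rfl

theorem kroneckerBlock_mulVec_apply [NonUnitalNonAssocSemiring R] (a b : R) (x : Fin (r + 1) → R)
    (i : Fin r) : (kroneckerBlock r a b *ᵥ x) i = a * x i.castSucc + b * x i.succ := by
  rw [mulVec, kroneckerBlock_row, add_dotProduct, single_dotProduct, single_dotProduct]

theorem kroneckerBlock_mulVec_rationalNormalCurve [CommRing R] (a b : R) :
    kroneckerBlock r a b *ᵥ rationalNormalCurve r (-a) b = 0 := by
  ext i
  have hi : r - (i : ℕ) = r - (i + 1) + 1 := by omega
  simp only [kroneckerBlock_mulVec_apply, rationalNormalCurve, Fin.val_castSucc, Fin.val_succ,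
    Pi.zero_apply, hi, pow_succ]
  ring

theorem ofFn_single [Semiring R] [DecidableEq R] {n : ℕ} (i : Fin n) (c : R) :
    ofFn n (Pi.single i c) = monomial i c := by
  rw [ofFn_eq_sum_monomial, Fintype.sum_eq_single i fun j hj => by simp [hj], Pi.single_eq_same]

theorem ofFn_vecMul_kroneckerBlock [CommSemiring R] [DecidableEq R] (a b : R) (u : Fin r → R) :
    ofFn (r + 1) (u ᵥ* kroneckerBlock r a b) = ofFn r u * (C a + C b * X) := by
  have row_eq (i : Fin r) :
      ofFn (r + 1) (kroneckerBlock r a b i) = monomial i 1 * (C a + C b * X) := by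
    simp only [kroneckerBlock_row, map_add, ofFn_single, Fin.val_castSucc, Fin.val_succ, mul_add,
      monomial_mul_C, C_mul_X_eq_monomial, monomial_mul_monomial, one_mul]
  calc ofFn (r + 1) (u ᵥ* kroneckerBlock r a b)
      = ∑ i, u i • (monomial i 1 * (C a + C b * X)) := by
        simp only [vecMul_eq_sum, map_sum, map_smul, row_eq]
    _ = ofFn r u * (C a + C b * X) := by
        simp only [ofFn_eq_sum_monomial, Finset.sum_mul, ← smul_mul_assoc, smul_monomial,
          smul_eq_mul, mul_one]

theorem linearIndependent_row_kroneckerBlock [CommRing R] [IsDomain R] {a b : R}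
    (hab : ¬(a = 0 ∧ b = 0)) : LinearIndependent R (kroneckerBlock r a b).row := by
  classical
  have linear_ne_zero : C a + C b * X ≠ 0 := fun h =>
    hab ⟨by simpa using congrArg (coeff · 0) h, by simpa using congrArg (coeff · 1) h⟩
  rw [← vecMul_injective_iff]
  intro u v huv
  apply injective_ofFn r
  apply mul_right_cancel₀ linear_ne_zero
  simpa only [ofFn_vecMul_kroneckerBlock] using congrArg (ofFn (r + 1)) huv

end KroneckerBlock

section Kernel

theorem rank_add_finrank_ker_mulVecLin {m n K : Type*} [Fintype n] [Field K] (M : Matrix m n K) :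
    M.rank + Module.finrank K (LinearMap.ker M.mulVecLin) = Fintype.card n :=
  M.mulVecLin.finrank_range_add_finrank_ker.trans (Module.finrank_fintype_fun_eq_card K)

theorem fromBlocks_zero_mulVec_eq_zero_iff {l m n o R : Type*} [Fintype l] [Fintype m]
    [NonUnitalNonAssocSemiring R] (B : Matrix n m R) (C : Matrix o l R) (x : l ⊕ m → R) :
    fromBlocks 0 B C 0 *ᵥ x = 0 ↔ C *ᵥ (x ∘ Sum.inl) = 0 ∧ B *ᵥ (x ∘ Sum.inr) = 0 := by
  rw [fromBlocks_mulVec, ← Sum.elim_zero_zero, Sum.elim_eq_iff]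
  simp only [zero_mulVec, zero_add, add_zero, and_comm]

theorem submatrix_mulVec_comp_eq_zero_iff {l m n o R : Type*} [Fintype n] [Fintype o]
    [NonUnitalNonAssocSemiring R] (M : Matrix m n R) {f : l → m} (hf : f.Surjective) (e : o ≃ n)
    (v : n → R) : M.submatrix f e *ᵥ (v ∘ e) = 0 ↔ M *ᵥ v = 0 := by
  rw [submatrix_mulVec_equiv, Function.comp_assoc, e.self_comp_symm, Function.comp_id]
  exact hf.injective_comp_right.eq_iff (b := (0 : m → R))

variable {K : Type*} [Field K] (r : ℕ) {a b : K} (hab : ¬(a = 0 ∧ b = 0))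
include hab

theorem ker_mulVecLin_kroneckerBlock :
    LinearMap.ker (kroneckerBlock r a b).mulVecLin =
      Submodule.span K {rationalNormalCurve r (-a) b} := by
  have hne : rationalNormalCurve r (-a) b ≠ 0 :=
    rationalNormalCurve_ne_zero r (by rwa [neg_eq_zero])
  have hrank : (kroneckerBlock r a b).rank = r := by
    simpa using (linearIndependent_row_kroneckerBlock r hab).rank_matrix
  have hker := rank_add_finrank_ker_mulVecLin (kroneckerBlock r a b)
  rw [hrank, Fintype.card_fin, Nat.add_left_cancel_iff] at hker
  refine (Submodule.eq_of_le_of_finrank_eq ?_ ?_).symm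
  · rw [Submodule.span_singleton_le_iff_mem]
    exact kroneckerBlock_mulVec_rationalNormalCurve r a b
  · rw [finrank_span_singleton hne, hker]

theorem ker_mulVecLin_fromBlocks_kroneckerBlock :
    LinearMap.ker (fromBlocks 0 (kroneckerBlock r a b) (kroneckerBlock r a b)ᵀ 0).mulVecLin =
      Submodule.span K {Sum.elim (0 : Fin r → K) (rationalNormalCurve r (-a) b)} := by
  have transpose_mulVec_eq_zero_iff (u : Fin r → K) : (kroneckerBlock r a b)ᵀ *ᵥ u = 0 ↔ u = 0 := by
    rw [mulVec_transpose]
    exact map_eq_zero_iff (kroneckerBlock r a b).vecMulLinear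
      (vecMul_injective_iff.mpr (linearIndependent_row_kroneckerBlock r hab))
  have mulVec_eq_zero_iff (x : Fin (r + 1) → K) :
      kroneckerBlock r a b *ᵥ x = 0 ↔ ∃ c : K, c • rationalNormalCurve r (-a) b = x := by
    rw [← Submodule.mem_span_singleton, ← ker_mulVecLin_kroneckerBlock r hab]
    rfl
  ext x
  rw [LinearMap.mem_ker, mulVecLin_apply, fromBlocks_zero_mulVec_eq_zero_iff,
    transpose_mulVec_eq_zero_iff, mulVec_eq_zero_iff, Submodule.mem_span_singleton]
  constructor
  · rintro ⟨hinl, c, hinr⟩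
    refine ⟨c, ?_⟩
    rw [← Sum.elim_comp_inl_inr x, hinl, ← hinr]
    ext (i | j) <;> simp
  · rintro ⟨c, rfl⟩
    exact ⟨by ext; simp, c, rfl⟩

end Kernel

section CorankOne

variable (r : ℕ) (a b : ℂ)

/-- The splitting of the index set `{0, …, 2r}` into its first `r` and last `r + 1` elements. -/
def corankOneIndexEquiv : Fin r ⊕ Fin (r + 1) ≃ Fin (2 * r + 1) :=
  finSumFinEquiv.trans (finCongr (by omega))

@[simp]
theorem val_corankOneIndexEquiv_inl (i : Fin r) :
    (corankOneIndexEquiv r (Sum.inl i) : ℕ) = i := by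
  simp [corankOneIndexEquiv]

@[simp]
theorem val_corankOneIndexEquiv_inr (j : Fin (r + 1)) :
    (corankOneIndexEquiv r (Sum.inr j) : ℕ) = r + j := by
  simp [corankOneIndexEquiv]

theorem submatrix_corankOne_pencil :
    (a • corankOneA r + b • corankOneB r).submatrix (corankOneIndexEquiv r)
      (corankOneIndexEquiv r) =
      fromBlocks 0 (kroneckerBlock r a b) (kroneckerBlock r a b)ᵀ 0 := by
  ext (i | i) (j | j) <;>
    simp only [submatrix_apply, Matrix.add_apply, Matrix.smul_apply, corankOneA, corankOneB,
      of_apply, val_corankOneIndexEquiv_inl, val_corankOneIndexEquiv_inr, fromBlocks_apply₁₁,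
      fromBlocks_apply₁₂, fromBlocks_apply₂₁, fromBlocks_apply₂₂, transpose_apply,
      kroneckerBlock_row, Pi.add_apply, Pi.single_apply, Fin.ext_iff, Fin.val_castSucc,
      Fin.val_succ, smul_eq_mul, Matrix.zero_apply]
  all_goals grind

theorem kerGen_comp_corankOneIndexEquiv :
    kerGen r a b ∘ corankOneIndexEquiv r =
      Sum.elim (0 : Fin r → ℂ) (rationalNormalCurve r (-a) b) := by
  ext (i | j)
  · simp [kerGen]
  · have hj : 2 * r - (r + (j : ℕ)) = r - j := by omega
    simp [kerGen, rationalNormalCurve, hj]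

theorem kerGen_ne_zero {a b : ℂ} (hab : ¬(a = 0 ∧ b = 0)) : kerGen r a b ≠ 0 := by
  intro h
  apply rationalNormalCurve_ne_zero r (s := -a) (t := b) (by rwa [neg_eq_zero])
  rw [← Sum.elim_comp_inr (0 : Fin r → ℂ) (rationalNormalCurve r (-a) b),
    ← kerGen_comp_corankOneIndexEquiv, h]
  rfl

theorem ker_mulVecLin_corankOne_pencil {a b : ℂ} (hab : ¬(a = 0 ∧ b = 0)) :
    LinearMap.ker (a • corankOneA r + b • corankOneB r).mulVecLin =
      Submodule.span ℂ {kerGen r a b} := by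
  ext v
  let e := corankOneIndexEquiv r
  rw [Submodule.mem_span_singleton]
  calc v ∈ LinearMap.ker (a • corankOneA r + b • corankOneB r).mulVecLin
      ↔ v ∘ e ∈ LinearMap.ker
          ((a • corankOneA r + b • corankOneB r).submatrix e e).mulVecLin :=
        (submatrix_mulVec_comp_eq_zero_iff _ e.surjective e v).symm
    _ ↔ ∃ c : ℂ, c • (kerGen r a b ∘ e) = v ∘ e := by
        rw [submatrix_corankOne_pencil, ker_mulVecLin_fromBlocks_kroneckerBlock r hab,
          Submodule.mem_span_singleton, kerGen_comp_corankOneIndexEquiv]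
    _ ↔ ∃ c : ℂ, c • kerGen r a b = v :=
        exists_congr fun c => e.surjective.injective_comp_right.eq_iff (a := c • kerGen r a b)

end CorankOne

/-- For `(a,b) ≠ (0,0)` the kernel of `a𝒜 + bℬ` is spanned by the
nonzero vector `w(a,b)`; in particular `a𝒜 + bℬ` has rank `2r`. -/
theorem corankOne_kernel_description
    (r : ℕ) (hr : 1 ≤ r) (a b : ℂ) (hab : ¬(a = 0 ∧ b = 0)) :
    kerGen r a b ≠ 0 ∧
    LinearMap.ker (a • corankOneA r + b • corankOneB r).mulVecLin =
      Submodule.span ℂ {kerGen r a b} ∧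
    (a • corankOneA r + b • corankOneB r).rank = 2 * r := by
  have hne := kerGen_ne_zero r hab
  have hker := ker_mulVecLin_corankOne_pencil r hab
  have hrank := rank_add_finrank_ker_mulVecLin (a • corankOneA r + b • corankOneB r)
  rw [hker, finrank_span_singleton hne, Fintype.card_fin, Nat.add_right_cancel_iff] at hrank
  exact ⟨hne, hker, hrank⟩
end

section
/- Let h ≥ 1 and 1 ≤ r₁ ≤ r₂ ≤ … ≤ r_h be integers, r = r₁ + … + r_h, N = 2r + h − 1, and let 𝒜, ℬ be the canonical matrices associated to (r₁,…,r_h), with rows and columns indexed by pairs (i,p). Let Ã, B̃ be the compression-form matrices of size N+1 associated to (r₁,…,r_h). Then there exists a bijection σ from the index set {(i,p) : 1 ≤ i ≤ h, 0 ≤ p ≤ 2rᵢ} to {0,1,…,N} such that 𝒜_{u,v} = Ã_{σ(u),σ(v)} and ℬ_{u,v} = B̃_{σ(u),σ(v)} for all indices u, v. In particular the canonical pencil is congruent, via a permutation matrix, to a pencil of matrices having a zero block of size (N+1−r)×(N+1−r), i.e. it is a compression space. -/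
open Matrix

/-- `d i = r₁ + … + r_{i−1}` (sum of the parts preceding part `i`). -/
def dOf (h : ℕ) (rr : Fin h → ℕ) (i : Fin h) : ℕ :=
  ∑ j ∈ Finset.univ.filter (fun j => j < i), rr j

/-- The compression-form matrix `Ã` of size `2r + h = N + 1`: entry `1` exactly in
positions `(dᵢ + p, r + (dᵢ + i) + p)` and symmetrically, for `0 ≤ p ≤ rᵢ − 1`. -/
def comprA (h r : ℕ) (rr : Fin h → ℕ) : Matrix (Fin (2 * r + h)) (Fin (2 * r + h)) ℂ :=
  Matrix.of fun x y =>
    if ∃ i : Fin h, ∃ p : Fin (rr i),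
        (((x : ℕ) = dOf h rr i + p ∧ (y : ℕ) = r + (dOf h rr i + i) + p) ∨
         ((y : ℕ) = dOf h rr i + p ∧ (x : ℕ) = r + (dOf h rr i + i) + p))
    then 1 else 0

/-- The compression-form matrix `B̃` of size `2r + h = N + 1`: entry `1` exactly in
positions `(dᵢ + p, r + (dᵢ + i) + p + 1)` and symmetrically, for `0 ≤ p ≤ rᵢ − 1`. -/
def comprB (h r : ℕ) (rr : Fin h → ℕ) : Matrix (Fin (2 * r + h)) (Fin (2 * r + h)) ℂ :=
  Matrix.of fun x y =>
    if ∃ i : Fin h, ∃ p : Fin (rr i),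
        (((x : ℕ) = dOf h rr i + p ∧ (y : ℕ) = r + (dOf h rr i + i) + p + 1) ∨
         ((y : ℕ) = dOf h rr i + p ∧ (x : ℕ) = r + (dOf h rr i + i) + p + 1))
    then 1 else 0

/-!
Each block `{i} × {0, …, 2rᵢ}` splits into its first `rᵢ` indices and its last `rᵢ + 1` indices.
Listing the first parts of all blocks, and then all the last parts, is the required permutation:
the nonzero entries of `𝒜` and `ℬ` join a first part to the last part of the same block, so they
land in the two off-diagonal rectangles and leave the square on the last parts zero.
-/

section CompressionPermutation

variable {h : ℕ} (rr : Fin h → ℕ)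

lemma dOf_eq_sum_castLE (i : Fin h) :
    dOf h rr i = ∑ j : Fin (i : ℕ), rr (Fin.castLE i.2.le j) := by
  have himage : Finset.univ.map (Fin.castLEEmb i.2.le) = Finset.univ.filter (· < i) := by
    ext j
    simp only [Finset.mem_map, Finset.mem_univ, true_and, Finset.mem_filter, Fin.lt_def]
    exact ⟨by rintro ⟨k, rfl⟩; exact k.2, fun hj => ⟨⟨j, hj⟩, rfl⟩⟩
  rw [dOf, ← himage, Finset.sum_map]
  rfl

lemma dOf_add_one (i : Fin h) : dOf h (fun j => rr j + 1) i = dOf h rr i + i := by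
  simp [dOf_eq_sum_castLE, Finset.sum_add_distrib]

lemma val_finSigmaFinEquiv_eq_dOf_add (i : Fin h) (p : Fin (rr i)) :
    (finSigmaFinEquiv (n := rr) ⟨i, p⟩ : ℕ) = dOf h rr i + p := by
  rw [finSigmaFinEquiv_apply, dOf_eq_sum_castLE]

lemma dOf_add_lt_sum (i : Fin h) (p : Fin (rr i)) : dOf h rr i + p < ∑ j, rr j :=
  val_finSigmaFinEquiv_eq_dOf_add rr i p ▸ (finSigmaFinEquiv (n := rr) ⟨i, p⟩).2

/-- The splitting of the indices of the canonical pencil into the first `rᵢ` and the last `rᵢ + 1`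
indices of each block, written as a bijection from the split index type. -/
def splitEquiv : ((i : Fin h) × Fin (rr i)) ⊕ ((i : Fin h) × Fin (rr i + 1)) ≃ PencilIdx h rr :=
  (Equiv.sigmaSumDistrib _ _).symm.trans <| Equiv.sigmaCongrRight fun i =>
    finSumFinEquiv.trans (finCongr (by omega))

variable {rr}

lemma eq_splitEquiv_inl_iff {u : PencilIdx h rr} {i : Fin h} {p : Fin (rr i)} :
    u = splitEquiv rr (.inl ⟨i, p⟩) ↔ u.1 = i ∧ (u.2 : ℕ) = p := by
  obtain ⟨j, a⟩ := u
  constructor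
  · rintro ⟨⟩
    exact ⟨rfl, rfl⟩
  · rintro ⟨rfl, ha⟩
    exact congrArg (Sigma.mk j) (Fin.ext ha)

lemma eq_splitEquiv_inr_iff {u : PencilIdx h rr} {i : Fin h} {q : Fin (rr i + 1)} :
    u = splitEquiv rr (.inr ⟨i, q⟩) ↔ u.1 = i ∧ (u.2 : ℕ) = rr i + q := by
  obtain ⟨j, a⟩ := u
  constructor
  · rintro ⟨⟩
    exact ⟨rfl, rfl⟩
  · rintro ⟨rfl, ha⟩
    exact congrArg (Sigma.mk j) (Fin.ext ha)

variable (rr)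

/-- The permutation carrying the canonical pencil to compression form: the first parts of the blocks
are listed in order, followed by the last parts. -/
def compressionEquiv : PencilIdx h rr ≃ Fin (2 * (∑ i, rr i) + h) :=
  (splitEquiv rr).symm.trans <|
    (Equiv.sumCongr finSigmaFinEquiv finSigmaFinEquiv).trans <|
      finSumFinEquiv.trans <| finCongr <| by
        simp only [Finset.sum_add_distrib, Finset.sum_const, Finset.card_univ, Fintype.card_fin,
          smul_eq_mul, mul_one]
        ring

lemma val_compressionEquiv_inl (i : Fin h) (p : Fin (rr i)) :
    (compressionEquiv rr (splitEquiv rr (.inl ⟨i, p⟩)) : ℕ) = dOf h rr i + p := by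
  simp [compressionEquiv, ← val_finSigmaFinEquiv_eq_dOf_add]

lemma val_compressionEquiv_inr (i : Fin h) (q : Fin (rr i + 1)) :
    (compressionEquiv rr (splitEquiv rr (.inr ⟨i, q⟩)) : ℕ) =
      ∑ j, rr j + (dOf h rr i + i) + q := by
  simp [compressionEquiv, val_finSigmaFinEquiv_eq_dOf_add (fun j => rr j + 1), dOf_add_one,
    add_assoc]

variable {rr}

lemma val_compressionEquiv_eq_low_iff {u : PencilIdx h rr} {i : Fin h} (p : Fin (rr i)) :
    (compressionEquiv rr u : ℕ) = dOf h rr i + p ↔ u.1 = i ∧ (u.2 : ℕ) = p := by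
  rw [← val_compressionEquiv_inl, Fin.val_inj, EmbeddingLike.apply_eq_iff_eq,
    eq_splitEquiv_inl_iff]

lemma val_compressionEquiv_eq_high_iff {u : PencilIdx h rr} {i : Fin h} (q : Fin (rr i + 1)) :
    (compressionEquiv rr u : ℕ) = ∑ j, rr j + (dOf h rr i + i) + q ↔
      u.1 = i ∧ (u.2 : ℕ) = rr i + q := by
  rw [← val_compressionEquiv_inr, Fin.val_inj, EmbeddingLike.apply_eq_iff_eq,
    eq_splitEquiv_inr_iff]

end CompressionPermutation

section Support

variable {h : ℕ} {rr : Fin h → ℕ}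

/-- The positions of the nonzero entries of the canonical matrices: those of `𝒜` for the shift
`s = 0` and those of `ℬ` for `s = 1`. -/
def CanSupport (rr : Fin h → ℕ) (s : ℕ) (u v : PencilIdx h rr) : Prop :=
  u.1 = v.1 ∧
    (((v.2 : ℕ) = u.2 + rr u.1 + s ∧ (u.2 : ℕ) < rr u.1) ∨
      ((u.2 : ℕ) = v.2 + rr u.1 + s ∧ (v.2 : ℕ) < rr u.1))

/-- The positions of the entries of the compression-form matrices above the diagonal: those of `Ã`
for the shift `s = 0` and those of `B̃` for `s = 1`. -/
def ComprUpperSupport (rr : Fin h → ℕ) (s x y : ℕ) : Prop :=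
  ∃ i : Fin h, ∃ p : Fin (rr i),
    x = dOf h rr i + p ∧ y = ∑ j, rr j + (dOf h rr i + i) + p + s

lemma ComprUpperSupport.lt_sum {s x y : ℕ} (hxy : ComprUpperSupport rr s x y) :
    x < ∑ j, rr j := by
  obtain ⟨i, p, rfl, -⟩ := hxy
  exact dOf_add_lt_sum rr i p

lemma comprUpperSupport_compressionEquiv_iff {s : ℕ} (hs : s ≤ 1) (u v : PencilIdx h rr) :
    ComprUpperSupport rr s (compressionEquiv rr u) (compressionEquiv rr v) ↔
      u.1 = v.1 ∧ (v.2 : ℕ) = u.2 + rr u.1 + s ∧ (u.2 : ℕ) < rr u.1 := by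
  have high_iff (i : Fin h) (p : Fin (rr i)) :
      (compressionEquiv rr v : ℕ) = ∑ j, rr j + (dOf h rr i + i) + p + s ↔
        v.1 = i ∧ (v.2 : ℕ) = rr i + (p + s) := by
    rw [add_assoc _ (p : ℕ) s]
    exact val_compressionEquiv_eq_high_iff (⟨p + s, by omega⟩ : Fin (rr i + 1))
  simp only [ComprUpperSupport, val_compressionEquiv_eq_low_iff, high_iff]
  constructor
  · rintro ⟨_, p, ⟨rfl, hu⟩, hblock, hv⟩
    exact ⟨hblock.symm, by omega, by omega⟩
  · rintro ⟨hblock, hv, hu⟩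
    exact ⟨u.1, ⟨u.2, hu⟩, ⟨rfl, rfl⟩, hblock.symm, by dsimp only; omega⟩

lemma canSupport_iff_comprUpperSupport {s : ℕ} (hs : s ≤ 1) (u v : PencilIdx h rr) :
    CanSupport rr s u v ↔
      ComprUpperSupport rr s (compressionEquiv rr u) (compressionEquiv rr v) ∨
        ComprUpperSupport rr s (compressionEquiv rr v) (compressionEquiv rr u) := by
  rw [comprUpperSupport_compressionEquiv_iff hs, comprUpperSupport_compressionEquiv_iff hs,
    CanSupport, and_or_left]
  refine or_congr_right ?_
  rw [eq_comm (a := v.1)]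
  exact and_congr_right fun hblock => by simp only [hblock]

open scoped Classical in
lemma canA_apply (u v : PencilIdx h rr) :
    canA h rr u v = if CanSupport rr 0 u v then 1 else 0 :=
  if_congr Iff.rfl rfl rfl

open scoped Classical in
lemma canB_apply (u v : PencilIdx h rr) :
    canB h rr u v = if CanSupport rr 1 u v then 1 else 0 :=
  if_congr Iff.rfl rfl rfl

open scoped Classical in
lemma comprA_apply (x y : Fin (2 * (∑ i, rr i) + h)) :
    comprA h (∑ i, rr i) rr x y =
      if ComprUpperSupport rr 0 x y ∨ ComprUpperSupport rr 0 y x then 1 else 0 :=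
  if_congr (by simp only [ComprUpperSupport, add_zero, exists_or]) rfl rfl

open scoped Classical in
lemma comprB_apply (x y : Fin (2 * (∑ i, rr i) + h)) :
    comprB h (∑ i, rr i) rr x y =
      if ComprUpperSupport rr 1 x y ∨ ComprUpperSupport rr 1 y x then 1 else 0 :=
  if_congr (by simp only [ComprUpperSupport, exists_or]) rfl rfl

lemma canA_eq_submatrix_comprA (rr : Fin h → ℕ) :
    canA h rr =
      (comprA h (∑ i, rr i) rr).submatrix (compressionEquiv rr) (compressionEquiv rr) := by
  classical
  ext u v
  rw [submatrix_apply, canA_apply, comprA_apply]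
  exact if_congr (canSupport_iff_comprUpperSupport zero_le_one u v) rfl rfl

lemma canB_eq_submatrix_comprB (rr : Fin h → ℕ) :
    canB h rr =
      (comprB h (∑ i, rr i) rr).submatrix (compressionEquiv rr) (compressionEquiv rr) := by
  classical
  ext u v
  rw [submatrix_apply, canB_apply, comprB_apply]
  exact if_congr (canSupport_iff_comprUpperSupport le_rfl u v) rfl rfl

lemma not_comprUpperSupport_or_swap {s x y : ℕ} (hx : ∑ i, rr i ≤ x) (hy : ∑ i, rr i ≤ y) :
    ¬(ComprUpperSupport rr s x y ∨ ComprUpperSupport rr s y x) :=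
  not_or.2 ⟨fun hxy => hxy.lt_sum.not_ge hx, fun hyx => hyx.lt_sum.not_ge hy⟩

lemma comprA_eq_zero_of_sum_le {x y : Fin (2 * (∑ i, rr i) + h)}
    (hx : ∑ i, rr i ≤ (x : ℕ)) (hy : ∑ i, rr i ≤ (y : ℕ)) :
    comprA h (∑ i, rr i) rr x y = 0 := by
  rw [comprA_apply, if_neg (not_comprUpperSupport_or_swap hx hy)]

lemma comprB_eq_zero_of_sum_le {x y : Fin (2 * (∑ i, rr i) + h)}
    (hx : ∑ i, rr i ≤ (x : ℕ)) (hy : ∑ i, rr i ≤ (y : ℕ)) :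
    comprB h (∑ i, rr i) rr x y = 0 := by
  rw [comprB_apply, if_neg (not_comprUpperSupport_or_swap hx hy)]

end Support

theorem canonical_pencil_is_compression_space_general
    (h : ℕ) (rr : Fin h → ℕ) (r : ℕ) (hsum : ∑ i, rr i = r) :
    (∃ σ : PencilIdx h rr ≃ Fin (2 * r + h),
      ∀ u v : PencilIdx h rr,
        canA h rr u v = comprA h r rr (σ u) (σ v) ∧
        canB h rr u v = comprB h r rr (σ u) (σ v)) ∧
    (∀ x y : Fin (2 * r + h), r ≤ (x : ℕ) → r ≤ (y : ℕ) →
      comprA h r rr x y = 0 ∧ comprB h r rr x y = 0) := by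
  subst hsum
  exact ⟨⟨compressionEquiv rr, fun u v =>
      ⟨congrFun₂ (canA_eq_submatrix_comprA rr) u v, congrFun₂ (canB_eq_submatrix_comprB rr) u v⟩⟩,
    fun x y hx hy => ⟨comprA_eq_zero_of_sum_le hx hy, comprB_eq_zero_of_sum_le hx hy⟩⟩

/-- The canonical pencil is carried, by a permutation of the indices,
to the compression-form pencil; in particular the latter has a zero block of size
`(N + 1 − r) × (N + 1 − r)` (rows and columns with index `≥ r`), so the canonical
pencil is a compression space. -/
theorem canonical_pencil_is_compression_space
    (h : ℕ) (hh : 1 ≤ h) (rr : Fin h → ℕ) (hmono : Monotone rr) (hpos : ∀ i, 1 ≤ rr i)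
    (r : ℕ) (hsum : ∑ i, rr i = r) :
    (∃ σ : PencilIdx h rr ≃ Fin (2 * r + h),
      ∀ u v : PencilIdx h rr,
        canA h rr u v = comprA h r rr (σ u) (σ v) ∧
        canB h rr u v = comprB h r rr (σ u) (σ v)) ∧
    (∀ x y : Fin (2 * r + h), r ≤ (x : ℕ) → r ≤ (y : ℕ) →
      comprA h r rr x y = 0 ∧ comprB h r rr x y = 0) :=
  canonical_pencil_is_compression_space_general h rr r hsum
end
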